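/- arXiv:2405.10179 — 2 statements merged into one kernel-verified Lean document; each statement's English description precedes it below -/
import Mathlib

section
/- Let 0 < q < 1 and b_k = q^k for k ≥ 0. Then, in the linear setting, conditions (C1): lim_{n→∞} (1 − h_n)·ln n = 0 and (C2): sup_{k≥0} (b_k − b_{k+1})/b_{k+1} < ∞ both hold; consequently lim_{n→∞} H_{h_n}(J_n) = 1. -/
open Set Filter MeasureTheory Topology

noncomputable section

/-- Composition `g_{i₁} ∘ g_{i₂} ∘ ⋯ ∘ g_{i_l}` along a finite word. -/
def wordComp (g : ℕ → ℝ → ℝ) : List ℕ → ℝ → ℝ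
  | [] => id
  | k :: w => g k ∘ wordComp g w

/-- The limit set `J_n` of the IFS `S_n = {g_1, …, g_n}`. -/
def limitSet (g : ℕ → ℝ → ℝ) (n : ℕ) : Set ℝ :=
  ⋂ l : ℕ, ⋃ w ∈ {w : List ℕ | w.length = l + 1 ∧ ∀ i ∈ w, 1 ≤ i ∧ i ≤ n},
    wordComp g w '' Set.Icc (0 : ℝ) 1

/-- The decreasing affine map `g_k(x) = b_{k-1} - (b_{k-1} - b_k)·x`. -/
def gAff (b : ℕ → ℝ) (k : ℕ) (x : ℝ) : ℝ := b (k - 1) - (b (k - 1) - b k) * x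

/-!
Write `a k = gap b k`. The cylinders of level `l` cover `J_n`, and the `h_n`-th powers of their
diameters sum to at most `1`, so `H_{h_n}(J_n) ≤ 1`. For the converse, let `μ` be the self-similar
probability measure on `J_n` giving the `k`-th piece mass `a k ^ h_n`; by the mass distribution
principle it suffices that `μ I ≤ K_n * |I| ^ h_n` for all intervals `I`, with `K_n → 1`.

Hölder's inequality bounds the mass of a block of whole pieces by `n ^ (1 - h_n) * |block| ^ h_n`,
and (C1) says precisely that `n ^ (1 - h_n) → 1`. An incomplete piece at the end of `I` is a
scaled, mirrored copy of an interval at the end of `[0, 1]`, so the estimates for the intervals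
`(-∞, s]` and `[1 - u, ∞)` feed each other. Starting from the trivial bound `1`, every such pass
shrinks the error term by a factor `t ^ h_n < 1`; by (C2) the incomplete piece is never more than
the fraction `t` of the interval, which costs only the factor `ratioConst t h_n → 1`.

For `b k = q ^ k` the Moran equation is a geometric sum, and convexity of `x ^ h_n` in `h_n` turns
it into `(1 - h_n) * binEntropy q ≤ q ^ (h_n * n)`: the defect `1 - h_n` decays exponentially.
-/

section IteratedFunctionSystem

variable {g : ℕ → ℝ → ℝ}

lemma wordComp_map_range_succ (g : ℕ → ℝ → ℝ) (ω : ℕ → ℕ) (l : ℕ) (x : ℝ) :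
    wordComp g ((List.range (l + 1)).map ω) x =
      g (ω 0) (wordComp g ((List.range l).map fun i ↦ ω (i + 1)) x) := by
  simp [List.range_succ_eq_map, wordComp, Function.comp_def]

lemma continuous_wordComp (hg : ∀ k, Continuous (g k)) (w : List ℕ) :
    Continuous (wordComp g w) := by
  induction w with
  | nil => exact continuous_id
  | cons k w ih => exact (hg k).comp ih

lemma mapsTo_wordComp {s : Set ℝ} (hg : ∀ k, MapsTo (g k) s s) (w : List ℕ) :
    MapsTo (wordComp g w) s s := by
  induction w with
  | nil => exact mapsTo_id s
  | cons k w ih => exact (hg k).comp ih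

lemma dist_wordComp_le {a : ℕ → ℝ} (ha : ∀ k, 0 ≤ a k)
    (hg : ∀ k x y, dist (g k x) (g k y) ≤ a k * dist x y) (w : List ℕ) (x y : ℝ) :
    dist (wordComp g w x) (wordComp g w y) ≤ (w.map a).prod * dist x y := by
  induction w with
  | nil => simp [wordComp]
  | cons k w ih =>
    rw [List.map_cons, List.prod_cons, mul_assoc]
    exact (hg k _ _).trans (mul_le_mul_of_nonneg_left ih (ha k))

lemma measurableSet_limitSet (hg : ∀ k, Continuous (g k)) (n : ℕ) :
    MeasurableSet (limitSet g n) :=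
  .iInter fun _ ↦ .biUnion (to_countable _) fun w _ ↦
    (isCompact_Icc.image (continuous_wordComp hg w)).measurableSet

lemma ediam_wordComp_image_le {a : ℕ → ℝ} (ha : ∀ k, 0 ≤ a k)
    (hg : ∀ k x y, dist (g k x) (g k y) ≤ a k * dist x y) (w : List ℕ) :
    Metric.ediam (wordComp g w '' Icc 0 1) ≤ ENNReal.ofReal (w.map a).prod := by
  have hprod : 0 ≤ (w.map a).prod := List.prod_nonneg (by simpa using fun k _ ↦ ha k)
  refine Metric.ediam_le ?_
  rintro _ ⟨x, hx, rfl⟩ _ ⟨y, hy, rfl⟩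
  rw [edist_dist]
  refine ENNReal.ofReal_le_ofReal ((dist_wordComp_le ha hg w x y).trans ?_)
  exact mul_le_of_le_one_right hprod (Real.dist_le_of_mem_Icc_01 hx hy)

lemma limitSet_subset_iUnion_ofFn (g : ℕ → ℝ → ℝ) (n l : ℕ) :
    limitSet g n ⊆ ⋃ f : Fin (l + 1) → Finset.Icc 1 n,
      wordComp g (List.ofFn fun i ↦ (f i : ℕ)) '' Icc 0 1 := by
  intro x hx
  obtain ⟨w, ⟨hlength, hletters⟩, hxw⟩ := mem_iUnion₂.1 (mem_iInter.1 hx l)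
  rw [← hlength]
  refine mem_iUnion.2 ⟨fun i ↦ ⟨w[i], Finset.mem_Icc.2 (hletters _ (List.getElem_mem _))⟩, ?_⟩
  simpa using hxw

theorem hausdorffMeasure_limitSet_le_one {a : ℕ → ℝ} {r h : ℝ} {n : ℕ} (hr : r < 1) (h0 : 0 ≤ h)
    (ha : ∀ k, 0 ≤ a k) (har : ∀ k, a k ≤ r)
    (hg : ∀ k x y, dist (g k x) (g k y) ≤ a k * dist x y)
    (hmoran : ∑ k ∈ Finset.Icc 1 n, a k ^ h = 1) :
    μH[h] (limitSet g n) ≤ 1 := by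
  have hr0 : 0 ≤ r := (ha 0).trans (har 0)
  have hdiam : ∀ (l : ℕ) (f : Fin (l + 1) → Finset.Icc 1 n),
      Metric.ediam (wordComp g (List.ofFn fun i ↦ (f i : ℕ)) '' Icc 0 1) ≤
        ENNReal.ofReal (∏ i, a (f i)) := fun l f ↦ by
    simpa only [List.map_ofFn, List.prod_ofFn, Function.comp_apply] using
      ediam_wordComp_image_le ha hg (List.ofFn fun i ↦ (f i : ℕ))
  have hsum : ∀ l : ℕ, ∑ f : Fin (l + 1) → Finset.Icc 1 n,
      Metric.ediam (wordComp g (List.ofFn fun i ↦ (f i : ℕ)) '' Icc 0 1) ^ h ≤ 1 := fun l ↦ calc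
    _ ≤ ∑ f : Fin (l + 1) → Finset.Icc 1 n, ENNReal.ofReal (∏ i, a (f i) ^ h) := by
      gcongr with f
      rw [Real.finsetProd_rpow _ _ fun i _ ↦ ha _,
        ← ENNReal.ofReal_rpow_of_nonneg (Finset.prod_nonneg fun i _ ↦ ha _) h0]
      exact ENNReal.rpow_le_rpow (hdiam l f) h0
    _ = ENNReal.ofReal ((∑ k : Finset.Icc 1 n, a k ^ h) ^ (l + 1)) := by
      rw [Fintype.sum_pow, ENNReal.ofReal_sum_of_nonneg]
      exact fun f _ ↦ Finset.prod_nonneg fun i _ ↦ Real.rpow_nonneg (ha _) h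
    _ = 1 := by rw [Finset.sum_coe_sort (Finset.Icc 1 n) fun k ↦ a k ^ h, hmoran]; simp
  have hmesh : Tendsto (fun l : ℕ ↦ ENNReal.ofReal (r ^ (l + 1))) atTop (𝓝 0) := by
    simpa using ENNReal.tendsto_ofReal
      ((tendsto_pow_atTop_nhds_zero_of_lt_one hr0 hr).comp (tendsto_add_atTop_nat 1))
  refine (Measure.hausdorffMeasure_le_liminf_sum h (limitSet g n) _ hmesh _
    (.of_forall fun l f ↦ (hdiam l f).trans (ENNReal.ofReal_le_ofReal ?_))
    (.of_forall (limitSet_subset_iUnion_ofFn g n))).trans ?_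
  · simpa using Finset.prod_le_prod (s := .univ) (fun i _ ↦ ha (f i)) fun i _ ↦ har (f i)
  · exact (liminf_le_liminf (.of_forall hsum)).trans (liminf_const _).le

/-- The coding map of the system: the infinite address `ω` is sent to
`lim g_{ω 0} ∘ ⋯ ∘ g_{ω (l - 1)} (0)`. -/
def coding (g : ℕ → ℝ → ℝ) (ω : ℕ → ℕ) : ℝ :=
  limUnder atTop fun l : ℕ ↦ wordComp g ((List.range l).map ω) 0

/-- A system of maps that send `[0, 1]` into itself and contract with a common ratio `r < 1`. -/
structure IsContractingSystem (g : ℕ → ℝ → ℝ) (r : ℝ) : Prop where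
  ratio_nonneg : 0 ≤ r
  ratio_lt_one : r < 1
  dist_le : ∀ k x y, dist (g k x) (g k y) ≤ r * dist x y
  mapsTo : ∀ k, MapsTo (g k) (Icc 0 1) (Icc 0 1)

namespace IsContractingSystem

variable {r : ℝ}

lemma continuous (hg : IsContractingSystem g r) (k : ℕ) : Continuous (g k) :=
  (LipschitzWith.of_dist_le' (hg.dist_le k)).continuous

lemma tendsto_coding (hg : IsContractingSystem g r) (ω : ℕ → ℕ) :
    Tendsto (fun l ↦ wordComp g ((List.range l).map ω) 0) atTop (𝓝 (coding g ω)) := by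
  have hstep : ∀ (l : ℕ) (ω : ℕ → ℕ), dist (wordComp g ((List.range l).map ω) 0)
      (wordComp g ((List.range (l + 1)).map ω) 0) ≤ 1 * r ^ l := by
    intro l
    induction l with
    | zero =>
      intro ω
      simpa [wordComp] using Real.dist_le_of_mem_Icc_01 (x := 0) (by simp)
        (hg.mapsTo (ω 0) (x := 0) (by simp))
    | succ l ih =>
      intro ω
      rw [wordComp_map_range_succ, wordComp_map_range_succ, pow_succ', mul_left_comm]
      exact (hg.dist_le _ _ _).trans (mul_le_mul_of_nonneg_left (ih _) hg.ratio_nonneg)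
  exact (cauchySeq_of_le_geometric r 1 hg.ratio_lt_one (hstep · ω)).tendsto_limUnder

lemma coding_mem_Icc (hg : IsContractingSystem g r) (ω : ℕ → ℕ) : coding g ω ∈ Icc (0 : ℝ) 1 :=
  isClosed_Icc.mem_of_tendsto (hg.tendsto_coding ω)
    (.of_forall fun _ ↦ mapsTo_wordComp hg.mapsTo _ (by simp))

lemma coding_eq (hg : IsContractingSystem g r) (ω : ℕ → ℕ) :
    coding g ω = g (ω 0) (coding g fun i ↦ ω (i + 1)) := by
  have htail := hg.tendsto_coding fun i ↦ ω (i + 1)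
  refine tendsto_nhds_unique ((hg.tendsto_coding ω).comp (tendsto_add_atTop_nat 1)) ?_
  simpa only [Function.comp_def, wordComp_map_range_succ] using
    ((hg.continuous (ω 0)).tendsto _).comp htail

lemma coding_eq_wordComp (hg : IsContractingSystem g r) (l : ℕ) (ω : ℕ → ℕ) :
    coding g ω = wordComp g ((List.range l).map ω) (coding g fun i ↦ ω (i + l)) := by
  induction l generalizing ω with
  | zero => rfl
  | succ l ih =>
    rw [wordComp_map_range_succ, hg.coding_eq, ih]
    simp only [add_assoc]

lemma coding_mem_limitSet (hg : IsContractingSystem g r) {n : ℕ} {ω : ℕ → ℕ}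
    (hω : ∀ i, ω i ∈ Icc 1 n) : coding g ω ∈ limitSet g n := by
  refine mem_iInter.2 fun l ↦ mem_iUnion₂.2 ⟨(List.range (l + 1)).map ω, ⟨by simp, ?_⟩,
    _, hg.coding_mem_Icc fun i ↦ ω (i + (l + 1)), (hg.coding_eq_wordComp _ ω).symm⟩
  simpa using fun i _ ↦ hω i

lemma measurable_coding (hg : IsContractingSystem g r) : Measurable (coding g) := by
  refine measurable_of_tendsto_metrizable (fun l ↦ ?_) (tendsto_pi_nhds.2 hg.tendsto_coding)
  induction l with
  | zero => exact measurable_const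
  | succ l ih =>
    simp only [wordComp_map_range_succ]
    have hjoint : Measurable fun z : ℕ × ℝ ↦ g z.1 z.2 :=
      measurable_from_prod_countable_right fun k ↦ (hg.continuous k).measurable
    have htail : Measurable fun (ω : ℕ → ℕ) i ↦ ω (i + 1) := by fun_prop
    exact hjoint.comp ((measurable_pi_apply 0).prodMk (ih.comp htail))

end IsContractingSystem

end IteratedFunctionSystem

section SelfSimilarMeasure

/-- Prepends a letter to an infinite word; the inverse of splitting off the first letter. -/
def consWord {α : Type*} (z : α × (ℕ → α)) : ℕ → α
  | 0 => z.1
  | i + 1 => z.2 i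

lemma measurable_consWord {α : Type*} [MeasurableSpace α] : Measurable (consWord (α := α)) := by
  refine measurable_pi_lambda _ fun i ↦ ?_
  cases i
  · exact measurable_fst
  · exact (measurable_pi_apply _).comp measurable_snd

lemma consWord_preimage_pi_range_succ {α : Type*} (t : ℕ → Set α) (N : ℕ) :
    consWord ⁻¹' Set.pi (Finset.range (N + 1)) t =
      t 0 ×ˢ Set.pi (Finset.range N) fun i ↦ t (i + 1) := by
  ext z
  simp only [mem_preimage, Set.mem_pi, Finset.mem_coe, Finset.mem_range, mem_prod,
    Nat.forall_lt_succ_left, consWord]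

lemma map_consWord_prod_infinitePi {α : Type*} [MeasurableSpace α] (ν : Measure α)
    [IsProbabilityMeasure ν] :
    (ν.prod (Measure.infinitePi fun _ : ℕ ↦ ν)).map consWord =
      Measure.infinitePi fun _ : ℕ ↦ ν := by
  classical
  refine Measure.eq_infinitePi _ fun s t ht ↦ ?_
  obtain ⟨N, hsN⟩ := s.exists_nat_subset_range
  replace hsN : s ⊆ Finset.range (N + 1) := hsN.trans (Finset.range_subset_range.2 N.le_succ)
  let t' : ℕ → Set α := fun i ↦ if i ∈ s then t i else univ
  have ht' : ∀ i, MeasurableSet (t' i) := fun i ↦ by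
    by_cases hi : i ∈ s <;> simp [t', hi, ht]
  have hbox : Set.pi s t = Set.pi (Finset.range (N + 1)) t' := by
    ext ω
    simp only [Set.mem_pi, Finset.mem_coe, t']
    exact ⟨fun hω i _ ↦ by split_ifs with hi; exacts [hω i hi, mem_univ _],
      fun hω i hi ↦ by simpa [hi] using hω i (hsN hi)⟩
  calc
    _ = ν (t' 0) * ∏ i ∈ Finset.range N, ν (t' (i + 1)) := by
      rw [Measure.map_apply measurable_consWord (.pi (Finset.countable_toSet s) fun i _ ↦ ht i),
        hbox, consWord_preimage_pi_range_succ, Measure.prod_prod,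
        Measure.infinitePi_pi _ fun i _ ↦ ht' _]
    _ = ∏ i ∈ Finset.range (N + 1), ν (t' i) := by rw [Finset.prod_range_succ', mul_comm]
    _ = ∏ i ∈ s, ν (t i) := by
      rw [← Finset.prod_subset hsN fun i _ hi ↦ by simp [t', hi]]
      exact Finset.prod_congr rfl fun i hi ↦ by simp [t', hi]

/-- `μ` is carried by `limitSet g n` and is the mixture of its images under `g 1, …, g n` with
weights `p 1, …, p n`. -/
structure IsSelfSimilar (g : ℕ → ℝ → ℝ) (p : ℕ → ℝ) (n : ℕ) (μ : Measure ℝ) : Prop where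
  measureReal_eq_sum : ∀ F, MeasurableSet F →
    μ.real F = ∑ k ∈ Finset.Icc 1 n, p k * μ.real (g k ⁻¹' F)
  measure_compl_limitSet : μ (limitSet g n)ᶜ = 0

/-- The law on `ℕ` giving the letter `k` the probability `p k`, for `1 ≤ k ≤ n`. -/
def letterLaw (p : ℕ → ℝ) (n : ℕ) : Measure ℕ :=
  ∑ k ∈ Finset.Icc 1 n, ENNReal.ofReal (p k) • Measure.dirac k

variable {g : ℕ → ℝ → ℝ} {p : ℕ → ℝ} {r : ℝ} {n : ℕ}

lemma isProbabilityMeasure_letterLaw (hp : ∀ k, 0 ≤ p k) (hsum : ∑ k ∈ Finset.Icc 1 n, p k = 1) :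
    IsProbabilityMeasure (letterLaw p n) := by
  constructor
  simp [letterLaw, ← ENNReal.ofReal_sum_of_nonneg fun k _ ↦ hp k, hsum]

lemma letterLaw_compl_Icc (p : ℕ → ℝ) (n : ℕ) : letterLaw p n (Icc 1 n)ᶜ = 0 := by
  simp only [letterLaw, Measure.finsetSum_apply, Measure.smul_apply, smul_eq_mul]
  refine Finset.sum_eq_zero fun k hk ↦ ?_
  rw [Measure.dirac_apply' _ (.of_discrete), indicator_of_notMem, mul_zero]
  simpa using hk

lemma letterLaw_prod_real {β : Type*} [MeasurableSpace β] (hp : ∀ k, 0 ≤ p k) (P : Measure β)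
    [IsFiniteMeasure P] {E : Set (ℕ × β)} (hE : MeasurableSet E) :
    ((letterLaw p n).prod P).real E = ∑ k ∈ Finset.Icc 1 n, p k * P.real (Prod.mk k ⁻¹' E) := by
  have hfin : ∀ k ∈ Finset.Icc 1 n, ENNReal.ofReal (p k) * P (Prod.mk k ⁻¹' E) ≠ ⊤ :=
    fun k _ ↦ ENNReal.mul_ne_top ENNReal.ofReal_ne_top (measure_ne_top _ _)
  rw [measureReal_def, Measure.prod_apply hE, letterLaw, lintegral_finsetSum_measure]
  simp only [lintegral_smul_measure, lintegral_dirac, smul_eq_mul]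
  rw [ENNReal.toReal_sum hfin]
  simp [measureReal_def, ENNReal.toReal_ofReal (hp _)]

theorem exists_isSelfSimilar (hg : IsContractingSystem g r) (hp : ∀ k, 0 ≤ p k)
    (hsum : ∑ k ∈ Finset.Icc 1 n, p k = 1) :
    ∃ μ : Measure ℝ, IsProbabilityMeasure μ ∧ IsSelfSimilar g p n μ := by
  have := isProbabilityMeasure_letterLaw hp hsum
  let P : Measure (ℕ → ℕ) := Measure.infinitePi fun _ ↦ letterLaw p n
  have hletters : ∀ᵐ ω ∂P, ∀ i, ω i ∈ Icc 1 n := by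
    refine ae_all_iff.2 fun i ↦ ?_
    exact (measurePreserving_eval_infinitePi _ i).quasiMeasurePreserving.ae
      (mem_ae_iff.2 (letterLaw_compl_Icc p n))
  refine ⟨P.map (coding g), Measure.isProbabilityMeasure_map hg.measurable_coding.aemeasurable,
    fun F hF ↦ ?_, ?_⟩
  · have hcodingF := hg.measurable_coding hF
    simp only [map_measureReal_apply hg.measurable_coding, hF, (hg.continuous _).measurable hF]
    have hshift : ((letterLaw p n).prod P).map consWord = P := map_consWord_prod_infinitePi _
    conv_lhs => rw [← hshift]
    rw [map_measureReal_apply measurable_consWord hcodingF,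
      letterLaw_prod_real hp _ (measurable_consWord hcodingF)]
    refine Finset.sum_congr rfl fun k _ ↦ ?_
    have hcons : ∀ ω, coding g (consWord (k, ω)) = g k (coding g ω) :=
      fun ω ↦ hg.coding_eq (consWord (k, ω))
    simp only [preimage_preimage, hcons]
  · rw [Measure.map_apply hg.measurable_coding (measurableSet_limitSet hg.continuous n).compl]
    exact mem_ae_iff.1 (hletters.mono fun ω ↦ hg.coding_mem_limitSet)

end SelfSimilarMeasure

theorem smul_le_hausdorffMeasure_of_measureReal_Icc_le {μ : Measure ℝ} [IsFiniteMeasure μ]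
    {K h : ℝ} (hK : 0 < K) (h0 : 0 ≤ h)
    (hμ : ∀ x y, x ≤ y → μ.real (Icc x y) ≤ K * (y - x) ^ h) :
    ENNReal.ofReal K⁻¹ • μ ≤ μH[h] := by
  refine Measure.le_hausdorffMeasure h _ 1 one_pos fun s hs ↦ ?_
  have hbdd : Bornology.IsBounded s :=
    Metric.isBounded_iff_ediam_ne_top.2 (hs.trans_lt ENNReal.one_lt_top).ne
  have hle : sInf s ≤ sSup s := Real.sInf_le_sSup s hbdd.bddBelow hbdd.bddAbove
  have hmass : μ s ≤ ENNReal.ofReal (K * (sSup s - sInf s) ^ h) := calc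
    μ s ≤ μ (Icc (sInf s) (sSup s)) := measure_mono hbdd.subset_Icc_sInf_sSup
    _ = ENNReal.ofReal (μ.real (Icc (sInf s) (sSup s))) := (ofReal_measureReal).symm
    _ ≤ _ := ENNReal.ofReal_le_ofReal (hμ _ _ hle)
  calc
    (ENNReal.ofReal K⁻¹ • μ) s ≤ ENNReal.ofReal K⁻¹ * ENNReal.ofReal (K * (sSup s - sInf s) ^ h) :=
      mul_le_mul_right hmass _
    _ = Metric.ediam s ^ h := by
      rw [← ENNReal.ofReal_mul (inv_nonneg.2 hK.le), inv_mul_cancel_left₀ hK.ne',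
        Real.ediam_eq hbdd, ENNReal.ofReal_rpow_of_nonneg (sub_nonneg.2 hle) h0]

section PowerInequalities

variable {h t : ℝ}

lemma sum_rpow_le_card_rpow_mul_rpow_sum {ι : Type*} (s : Finset ι) {x : ι → ℝ}
    (hx : ∀ i ∈ s, 0 ≤ x i) (h0 : 0 < h) (h1 : h ≤ 1) :
    ∑ i ∈ s, x i ^ h ≤ (s.card : ℝ) ^ (1 - h) * (∑ i ∈ s, x i) ^ h := by
  have hpow : ∀ i ∈ s, 0 ≤ x i ^ h := fun i hi ↦ Real.rpow_nonneg (hx i hi) h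
  have hsum : 0 ≤ ∑ i ∈ s, x i ^ h := Finset.sum_nonneg hpow
  have hpowerMean :=
    Real.rpow_sum_le_const_mul_sum_rpow_of_nonneg s (one_le_inv_iff₀.2 ⟨h0, h1⟩) hpow
  rw [Finset.sum_congr rfl fun i hi ↦ Real.rpow_rpow_inv (hx i hi) h0.ne'] at hpowerMean
  calc
    ∑ i ∈ s, x i ^ h = ((∑ i ∈ s, x i ^ h) ^ h⁻¹) ^ h :=
      (Real.rpow_inv_rpow hsum h0.ne').symm
    _ ≤ ((s.card : ℝ) ^ (h⁻¹ - 1) * ∑ i ∈ s, x i) ^ h := by gcongr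
    _ = (s.card : ℝ) ^ (1 - h) * (∑ i ∈ s, x i) ^ h := by
      rw [Real.mul_rpow (by positivity) (Finset.sum_nonneg hx), ← Real.rpow_mul (by positivity),
        sub_mul, inv_mul_cancel₀ h0.ne', one_mul]

lemma add_rpow_add_rpow_le {x y z : ℝ} (hx : 0 ≤ x) (hy : 0 ≤ y) (hz : 0 ≤ z)
    (h0 : 0 < h) (h1 : h ≤ 1) :
    x ^ h + y ^ h + z ^ h ≤ 3 ^ (1 - h) * (x + y + z) ^ h := by
  simpa [Fin.sum_univ_three] using sum_rpow_le_card_rpow_mul_rpow_sum Finset.univ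
    (x := ![x, y, z]) (fun i _ ↦ by fin_cases i <;> assumption) h0 h1

/-- The least constant `C` with `(1 - θ) ^ h ≤ C * (1 - θ ^ h)` for all `θ ∈ [0, t]`: the price, in
`h`-dimensional mass, of extending an interval by a further piece of relative length at most `t`. -/
def ratioConst (t h : ℝ) : ℝ := (1 - t) ^ h / (1 - t ^ h)

lemma one_sub_rpow_le_ratioConst_mul {θ : ℝ} (hθ0 : 0 ≤ θ) (hθt : θ ≤ t) (ht : t < 1)
    (h0 : 0 < h) (h1 : h ≤ 1) : (1 - θ) ^ h ≤ ratioConst t h * (1 - θ ^ h) := by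
  have hθ : 0 < 1 - θ := by linarith
  have ht' : 0 < 1 - t := sub_pos.2 ht
  have hth : 0 < 1 - t ^ h := sub_pos.2 (Real.rpow_lt_one (hθ0.trans hθt) ht h0)
  have hsecant : (1 - θ) / (1 - t) ≤ (1 - θ ^ h) / (1 - t ^ h) := by
    have hconcave := (Real.concaveOn_rpow h0.le h1).neg.secant_mono (a := 1) (x := θ) (y := t)
      (by simp) hθ0 (hθ0.trans hθt) (by linarith) ht.ne hθt
    simp only [Pi.neg_apply, Real.one_rpow] at hconcave
    rw [div_le_iff_of_neg (by linarith), div_mul_eq_mul_div,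
      div_le_iff_of_neg (by linarith)] at hconcave
    rw [div_le_div_iff₀ ht' hth]
    linarith
  have hpow : (1 - θ) ^ h ≤ (1 - t) ^ h * ((1 - θ) / (1 - t)) := by
    have hanti := Real.rpow_le_rpow_of_nonpos ht' (sub_le_sub_left hθt 1) (sub_nonpos.2 h1)
    rw [Real.rpow_sub_one hθ.ne', Real.rpow_sub_one ht'.ne', div_le_iff₀ hθ] at hanti
    exact hanti.trans_eq (by ring)
  calc
    (1 - θ) ^ h ≤ (1 - t) ^ h * ((1 - θ) / (1 - t)) := hpow
    _ ≤ (1 - t) ^ h * ((1 - θ ^ h) / (1 - t ^ h)) := by gcongr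
    _ = ratioConst t h * (1 - θ ^ h) := by rw [ratioConst]; ring

lemma one_le_ratioConst (ht0 : 0 ≤ t) (ht : t < 1) (h0 : 0 < h) (h1 : h ≤ 1) :
    1 ≤ ratioConst t h := by
  simpa [Real.zero_rpow h0.ne'] using one_sub_rpow_le_ratioConst_mul le_rfl ht0 ht h0 h1

lemma rpow_add_ratioConst_mul_rpow_le {x y : ℝ} (hx : 0 < x) (hy : 0 ≤ y) (hyt : y ≤ t * (x + y))
    (ht : t < 1) (h0 : 0 < h) (h1 : h ≤ 1) :
    x ^ h + ratioConst t h * y ^ h ≤ ratioConst t h * (x + y) ^ h := by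
  have hxy : 0 < x + y := by linarith
  have hratio := one_sub_rpow_le_ratioConst_mul (by positivity) ((div_le_iff₀ hxy).2 hyt) ht h0 h1
  rw [one_sub_div hxy.ne', add_sub_cancel_right, Real.div_rpow hx.le hxy.le,
    Real.div_rpow hy hxy.le, one_sub_div (by positivity), ← mul_div_assoc,
    div_le_div_iff_of_pos_right (by positivity)] at hratio
  linarith

end PowerInequalities

lemma le_of_forall_le_add_pow {a c r : ℝ} (hr0 : 0 ≤ r) (hr1 : r < 1)
    (hle : ∀ l : ℕ, a ≤ c + r ^ l) : a ≤ c := by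
  have hlim := (tendsto_pow_atTop_nhds_zero_of_lt_one hr0 hr1).const_add c
  simpa using ge_of_tendsto' hlim hle

section PartitionSequence

/-- The sequences `1 = b 0 > b 1 > ⋯ → 0` cutting `(0, 1]` into the pieces `[b k, b (k - 1)]`. -/
structure IsPartitionSeq (b : ℕ → ℝ) : Prop where
  strictAnti : StrictAnti b
  zero : b 0 = 1
  tendsto_zero : Tendsto b atTop (𝓝 0)

/-- The length `a_k` of the piece `[b k, b (k - 1)]`; truncated subtraction gives `gap b 0 = 0`. -/
def gap (b : ℕ → ℝ) (k : ℕ) : ℝ := b (k - 1) - b k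

/-- `t < 1` bounds the relative length `gap b (k + 1) / b k` of every piece, and also `b 1`. -/
structure HasGapRatio (b : ℕ → ℝ) (t : ℝ) : Prop where
  lt_one : t < 1
  b_one_le : b 1 ≤ t
  sub_le : ∀ k, b k - b (k + 1) ≤ t * b k

variable {b : ℕ → ℝ} {t : ℝ} {k : ℕ}

lemma gap_succ (b : ℕ → ℝ) (k : ℕ) : gap b (k + 1) = b k - b (k + 1) := rfl

lemma gAff_eq (b : ℕ → ℝ) (k : ℕ) (x : ℝ) : gAff b k x = b (k - 1) - gap b k * x := rfl

lemma dist_gAff (b : ℕ → ℝ) (k : ℕ) (x y : ℝ) :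
    dist (gAff b k x) (gAff b k y) = |gap b k| * dist x y := by
  rw [Real.dist_eq, Real.dist_eq, abs_sub_comm x, ← abs_mul, gAff_eq, gAff_eq]
  ring_nf

lemma continuous_gAff (b : ℕ → ℝ) (k : ℕ) : Continuous (gAff b k) := by
  unfold gAff
  fun_prop

lemma sum_Ioc_gap (b : ℕ → ℝ) {i j : ℕ} (hij : i ≤ j) :
    ∑ k ∈ Finset.Ioc i j, gap b k = b i - b j := by
  induction j, hij using Nat.le_induction with
  | base => simp
  | succ j hij ih =>
    rw [Finset.sum_Ioc_succ_top (by lia), ih, gap_succ]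
    ring

namespace IsPartitionSeq

lemma pos (hb : IsPartitionSeq b) (k : ℕ) : 0 < b k :=
  (hb.strictAnti.antitone.le_of_tendsto hb.tendsto_zero (k + 1)).trans_lt
    (hb.strictAnti k.lt_succ_self)

lemma le_one (hb : IsPartitionSeq b) (k : ℕ) : b k ≤ 1 :=
  hb.zero ▸ hb.strictAnti.antitone k.zero_le

lemma gap_nonneg (hb : IsPartitionSeq b) (k : ℕ) : 0 ≤ gap b k :=
  sub_nonneg.2 (hb.strictAnti.antitone (k.sub_le 1))

lemma gap_pos (hb : IsPartitionSeq b) (hk : k ≠ 0) : 0 < gap b k :=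
  sub_pos.2 (hb.strictAnti (by lia))

lemma gap_lt_one (hb : IsPartitionSeq b) (k : ℕ) : gap b k < 1 := by
  have := hb.pos k
  have := hb.le_one (k - 1)
  rw [gap]
  linarith

lemma exists_lt_le (hb : IsPartitionSeq b) {s : ℝ} (hs0 : 0 < s) (hs1 : s ≤ 1) :
    ∃ m, b (m + 1) < s ∧ s ≤ b m := by
  classical
  have hex : ∃ m, b m < s := (hb.tendsto_zero.eventually_lt_const hs0).exists
  obtain ⟨m, hm⟩ : ∃ m, Nat.find hex = m + 1 :=
    Nat.exists_eq_succ_of_ne_zero fun h0 ↦ by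
      have := Nat.find_spec hex
      rw [h0, hb.zero] at this
      linarith
  exact ⟨m, hm ▸ Nat.find_spec hex, not_lt.1 (Nat.find_min hex (by lia))⟩

lemma mapsTo_gAff_Icc (hb : IsPartitionSeq b) (k : ℕ) :
    MapsTo (gAff b k) (Icc 0 1) (Icc (b k) (b (k - 1))) := by
  rintro x ⟨hx0, hx1⟩
  have hgap := hb.gap_nonneg k
  rw [gAff_eq]
  constructor <;> nlinarith [gap.eq_1 b k]

lemma mapsTo_gAff_Ioo (hb : IsPartitionSeq b) (hk : k ≠ 0) :
    MapsTo (gAff b k) (Ioo 0 1) (Ioo (b k) (b (k - 1))) := by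
  rintro x ⟨hx0, hx1⟩
  have hgap := hb.gap_pos hk
  rw [gAff_eq]
  constructor <;> nlinarith [gap.eq_1 b k]

lemma limitSet_subset_Ioo (hb : IsPartitionSeq b) (n : ℕ) : limitSet (gAff b) n ⊆ Ioo 0 1 := by
  intro x hx
  obtain ⟨w, ⟨hlength, hletters⟩, y, hy, rfl⟩ := mem_iUnion₂.1 (mem_iInter.1 hx 1)
  obtain ⟨i, j, rfl⟩ := List.length_eq_two.1 hlength
  have hi : i ≠ 0 := by have := hletters i (by simp); lia
  have hgap := hb.gap_pos hi
  have hinner : 0 < gAff b j y := (hb.pos j).trans_le (hb.mapsTo_gAff_Icc j hy).1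
  have hinner' : gAff b j y ≤ 1 := (hb.mapsTo_gAff_Icc j hy).2.trans (hb.le_one _)
  have houter := (hb.mapsTo_gAff_Icc i ⟨hinner.le, hinner'⟩).1
  refine ⟨(hb.pos i).trans_le houter, ?_⟩
  change b (i - 1) - gap b i * gAff b j y < 1
  nlinarith [hb.le_one (i - 1)]

lemma ratio_nonneg (hb : IsPartitionSeq b) (ht : HasGapRatio b t) : 0 ≤ t :=
  (hb.pos 1).le.trans ht.b_one_le

lemma gap_le (hb : IsPartitionSeq b) (ht : HasGapRatio b t) (k : ℕ) : gap b k ≤ t := by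
  have ht0 := hb.ratio_nonneg ht
  cases k with
  | zero => simpa [gap] using ht0
  | succ k => exact (ht.sub_le k).trans (mul_le_of_le_one_right ht0 (hb.le_one k))

lemma gap_rpow_mul_le (hb : IsPartitionSeq b) (ht : HasGapRatio b t) {h D : ℝ} (h0 : 0 < h)
    (hD : 0 ≤ D) (k : ℕ) : gap b k ^ h * D ≤ t ^ h * D := by
  gcongr
  exacts [hb.gap_nonneg k, hb.gap_le ht k]

lemma isContractingSystem_gAff (hb : IsPartitionSeq b) (ht : HasGapRatio b t) :
    IsContractingSystem (gAff b) t where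
  ratio_nonneg := hb.ratio_nonneg ht
  ratio_lt_one := ht.lt_one
  dist_le k x y := by
    rw [dist_gAff, abs_of_nonneg (hb.gap_nonneg k)]
    gcongr
    exact hb.gap_le ht k
  mapsTo k := (hb.mapsTo_gAff_Icc k).mono_right (Icc_subset_Icc (hb.pos k).le (hb.le_one _))

lemma exists_hasGapRatio (hb : IsPartitionSeq b)
    (hC2 : ∃ M : ℝ, ∀ k, (b k - b (k + 1)) / b (k + 1) ≤ M) : ∃ t, HasGapRatio b t := by
  obtain ⟨M, hM⟩ := hC2
  have hM0 : 0 ≤ M := (div_nonneg (hb.gap_nonneg 1) (hb.pos 1).le).trans (hM 0)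
  refine ⟨max (b 1) (M / (1 + M)), max_lt ?_ ?_, le_max_left _ _, fun k ↦ ?_⟩
  · exact hb.zero ▸ hb.strictAnti one_pos
  · exact (div_lt_one (by linarith)).2 (by linarith)
  · refine le_trans ?_ (mul_le_mul_of_nonneg_right (le_max_right _ _) (hb.pos k).le)
    have hk := (div_le_iff₀ (hb.pos _)).1 (hM k)
    rw [div_mul_eq_mul_div, le_div_iff₀ (by linarith)]
    linarith

lemma gAff_preimage_Icc (hb : IsPartitionSeq b) (k : ℕ) (x y : ℝ) :
    gAff b (k + 1) ⁻¹' Icc x y =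
      Icc ((b k - y) / gap b (k + 1)) ((b k - x) / gap b (k + 1)) := by
  have hgap := hb.gap_pos k.succ_ne_zero
  ext z
  rw [mem_preimage, mem_Icc, mem_Icc, div_le_iff₀ hgap, le_div_iff₀ hgap, gAff_eq,
    Nat.add_sub_cancel]
  constructor <;> rintro ⟨_, _⟩ <;> constructor <;> linarith

end IsPartitionSeq

end PartitionSequence

section MassEstimates

/-- The self-similar measure of the system `gAff b 1, …, gAff b n` giving each piece the
`h`-th power of its length as mass. -/
abbrev IsMoranMeasure (b : ℕ → ℝ) (h : ℝ) (n : ℕ) (μ : Measure ℝ) : Prop :=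
  IsSelfSimilar (gAff b) (fun k ↦ gap b k ^ h) n μ

/-- The constant in the one-sided mass estimates: Hölder's inequality over `n` pieces costs
`n ^ (1 - h)`, and an incomplete last piece costs `ratioConst t h`. -/
def massConst (n : ℕ) (t h : ℝ) : ℝ := n ^ (1 - h) * ratioConst t h

lemma rpow_le_massConst {n : ℕ} {t h : ℝ} (ht0 : 0 ≤ t) (ht : t < 1) (h0 : 0 < h) (h1 : h ≤ 1) :
    (n : ℝ) ^ (1 - h) ≤ massConst n t h :=
  le_mul_of_one_le_right (by positivity) (one_le_ratioConst ht0 ht h0 h1)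

lemma one_le_massConst {n : ℕ} {t h : ℝ} (hn : 1 ≤ n) (ht0 : 0 ≤ t) (ht : t < 1) (h0 : 0 < h)
    (h1 : h ≤ 1) : 1 ≤ massConst n t h :=
  (Real.one_le_rpow (by exact_mod_cast hn) (sub_nonneg.2 h1)).trans
    (rpow_le_massConst ht0 ht h0 h1)

lemma massConst_mul_rpow_le {n : ℕ} {t h x y : ℝ} (hn : 1 ≤ n) (ht0 : 0 ≤ t) (ht : t < 1)
    (h0 : 0 < h) (h1 : h ≤ 1) (hx : 0 ≤ x) (hxy : x ≤ y) :
    massConst n t h * x ^ h ≤ 3 ^ (1 - h) * massConst n t h * y ^ h := by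
  have hmass := one_le_massConst hn ht0 ht h0 h1
  have hthree : (1 : ℝ) ≤ 3 ^ (1 - h) := Real.one_le_rpow (by norm_num) (sub_nonneg.2 h1)
  have : x ^ h ≤ y ^ h := by gcongr
  gcongr
  nlinarith

lemma measureReal_le_massConst_mul_rpow {α : Type*} [MeasurableSpace α] {μ : Measure α}
    [IsProbabilityMeasure μ] {F : Set α} {n : ℕ} {t h s : ℝ} (hn : 1 ≤ n) (ht0 : 0 ≤ t) (ht : t < 1)
    (h0 : 0 < h) (h1 : h ≤ 1) (hs : 1 ≤ s) : μ.real F ≤ massConst n t h * s ^ h :=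
  measureReal_le_one.trans
    (one_le_mul_of_one_le_of_one_le (one_le_massConst hn ht0 ht h0 h1) (Real.one_le_rpow hs h0.le))

variable {b : ℕ → ℝ} {h t P D : ℝ} {n : ℕ} {μ : Measure ℝ} {F : Set ℝ}

namespace IsMoranMeasure

lemma measureReal_eq_zero (hμ : IsMoranMeasure b h n μ) (hb : IsPartitionSeq b)
    (hF : Disjoint F (Ioo 0 1)) : μ.real F = 0 := by
  rw [measureReal_def, measure_mono_null _ hμ.measure_compl_limitSet, ENNReal.toReal_zero]
  exact fun x hxF hx ↦ hF.le_bot ⟨hxF, hb.limitSet_subset_Ioo n hx⟩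

lemma measureReal_le_sum (hμ : IsMoranMeasure b h n μ) (hb : IsPartitionSeq b)
    (hF : MeasurableSet F) {s : Finset ℕ}
    (hs : ∀ k ∈ Finset.Icc 1 n, k ∉ s → Disjoint F (Ioo (b k) (b (k - 1)))) :
    μ.real F ≤ ∑ k ∈ Finset.Icc 1 n ∩ s, gap b k ^ h * μ.real (gAff b k ⁻¹' F) := by
  rw [hμ.measureReal_eq_sum F hF, ← Finset.sum_subset Finset.inter_subset_left]
  intro k hk hks
  have hk0 : k ≠ 0 := by have := (Finset.mem_Icc.1 hk).1; lia
  have hdisj := hs k hk fun hs ↦ hks (Finset.mem_inter.2 ⟨hk, hs⟩)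
  rw [hμ.measureReal_eq_zero hb, mul_zero]
  exact disjoint_left.2 fun x hx hx01 ↦ hdisj.le_bot ⟨hx, hb.mapsTo_gAff_Ioo hk0 hx01⟩

lemma measureReal_le_rpow [IsProbabilityMeasure μ] (hμ : IsMoranMeasure b h n μ)
    (hb : IsPartitionSeq b) (h0 : 0 < h) (h1 : h ≤ 1) (hF : MeasurableSet F) {i j : ℕ} (hij : i ≤ j)
    (hdisj : ∀ k ∈ Finset.Icc 1 n, k ∉ Finset.Ioc i j → Disjoint F (Ioo (b k) (b (k - 1)))) :
    μ.real F ≤ n ^ (1 - h) * (b i - b j) ^ h := by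
  have hgap : ∀ k ∈ Finset.Icc 1 n ∩ Finset.Ioc i j, 0 ≤ gap b k := fun k _ ↦ hb.gap_nonneg k
  calc
    μ.real F ≤ ∑ k ∈ Finset.Icc 1 n ∩ Finset.Ioc i j, gap b k ^ h * μ.real (gAff b k ⁻¹' F) :=
      hμ.measureReal_le_sum hb hF hdisj
    _ ≤ ∑ k ∈ Finset.Icc 1 n ∩ Finset.Ioc i j, gap b k ^ h :=
      Finset.sum_le_sum fun k hk ↦
        mul_le_of_le_one_right (Real.rpow_nonneg (hgap k hk) h) measureReal_le_one
    _ ≤ ((Finset.Icc 1 n ∩ Finset.Ioc i j).card : ℝ) ^ (1 - h) *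
        (∑ k ∈ Finset.Icc 1 n ∩ Finset.Ioc i j, gap b k) ^ h :=
      sum_rpow_le_card_rpow_mul_rpow_sum _ hgap h0 h1
    _ ≤ (n : ℝ) ^ (1 - h) * (∑ k ∈ Finset.Ioc i j, gap b k) ^ h := by
      have hcard : (Finset.Icc 1 n ∩ Finset.Ioc i j).card ≤ n := by
        simpa using Finset.card_le_card
          (Finset.inter_subset_left (s₁ := Finset.Icc 1 n) (s₂ := Finset.Ioc i j))
      have hsum : ∑ k ∈ Finset.Icc 1 n ∩ Finset.Ioc i j, gap b k ≤ ∑ k ∈ Finset.Ioc i j, gap b k :=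
        Finset.sum_le_sum_of_subset_of_nonneg Finset.inter_subset_right
          fun k _ _ ↦ hb.gap_nonneg k
      have := Finset.sum_nonneg hgap
      have := sub_nonneg.2 h1
      gcongr
    _ = n ^ (1 - h) * (b i - b j) ^ h := by rw [sum_Ioc_gap b hij]

lemma measureReal_Icc_le_rpow [IsProbabilityMeasure μ] (hμ : IsMoranMeasure b h n μ)
    (hb : IsPartitionSeq b) (h0 : 0 < h) (h1 : h ≤ 1) {i j : ℕ} (hij : i ≤ j) :
    μ.real (Icc (b j) (b i)) ≤ n ^ (1 - h) * (b i - b j) ^ h := by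
  refine hμ.measureReal_le_rpow hb h0 h1 measurableSet_Icc hij fun k _ hk ↦
    disjoint_left.2 fun x hx hxk ↦ hk (Finset.mem_Ioc.2 ⟨?_, ?_⟩)
  · exact hb.strictAnti.lt_iff_gt.1 (hxk.1.trans_le hx.2)
  · have := hb.strictAnti.lt_iff_gt.1 (hx.1.trans_lt hxk.2)
    lia

lemma measureReal_Iic_le_rpow [IsProbabilityMeasure μ] (hμ : IsMoranMeasure b h n μ)
    (hb : IsPartitionSeq b) (h0 : 0 < h) (h1 : h ≤ 1) (i : ℕ) :
    μ.real (Iic (b i)) ≤ n ^ (1 - h) * b i ^ h := by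
  refine (hμ.measureReal_le_rpow hb h0 h1 measurableSet_Iic (le_max_left i n) fun k hk hki ↦
    disjoint_left.2 fun x hx hxk ↦ hki (Finset.mem_Ioc.2 ⟨?_, ?_⟩)).trans ?_
  · exact hb.strictAnti.lt_iff_gt.1 (hxk.1.trans_le hx)
  · exact (Finset.mem_Icc.1 hk).2.trans (le_max_right i n)
  · have := sub_nonneg.2 (hb.strictAnti.antitone (le_max_left i n))
    have := (hb.pos (max i n)).le
    gcongr
    linarith

lemma measureReal_le_of_subset_piece (hμ : IsMoranMeasure b h n μ) (hb : IsPartitionSeq b)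
    (hF : MeasurableSet F) {k : ℕ} (hFk : F ⊆ Icc (b (k + 1)) (b k)) :
    μ.real F ≤ gap b (k + 1) ^ h * μ.real (gAff b (k + 1) ⁻¹' F) := by
  refine (hμ.measureReal_le_sum hb hF (s := {k + 1}) fun j _ hj ↦ ?_).trans
    (Finset.sum_le_sum_of_subset_of_nonneg Finset.inter_subset_right ?_) |>.trans_eq
    (Finset.sum_singleton _ _)
  · refine disjoint_left.2 fun x hx hxj ↦ hj (Finset.mem_singleton.2 ?_)
    have := hb.strictAnti.lt_iff_gt.1 ((hFk hx).1.trans_lt hxj.2)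
    have := hb.strictAnti.lt_iff_gt.1 (hxj.1.trans_le (hFk hx).2)
    lia
  · exact fun j _ _ ↦ mul_nonneg (Real.rpow_nonneg (hb.gap_nonneg j) h) measureReal_nonneg

lemma measureReal_le_of_preimage_le (hμ : IsMoranMeasure b h n μ) (hb : IsPartitionSeq b)
    (hF : MeasurableSet F) {k : ℕ} {x : ℝ} (hx : 0 ≤ x) (hFk : F ⊆ Icc (b (k + 1)) (b k))
    (hpre : μ.real (gAff b (k + 1) ⁻¹' F) ≤ P * (x / gap b (k + 1)) ^ h + D) :
    μ.real F ≤ P * x ^ h + gap b (k + 1) ^ h * D := by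
  have hgap := hb.gap_pos k.succ_ne_zero
  calc
    μ.real F ≤ gap b (k + 1) ^ h * μ.real (gAff b (k + 1) ⁻¹' F) :=
      hμ.measureReal_le_of_subset_piece hb hF hFk
    _ ≤ gap b (k + 1) ^ h * (P * (x / gap b (k + 1)) ^ h + D) := by gcongr
    _ = P * x ^ h + gap b (k + 1) ^ h * D := by
      rw [Real.div_rpow hx hgap.le]
      field_simp

lemma measureReal_Icc_left_le [IsFiniteMeasure μ] (hμ : IsMoranMeasure b h n μ)
    (hb : IsPartitionSeq b) (hright : ∀ u, 0 ≤ u → μ.real (Ici (1 - u)) ≤ P * u ^ h + D) {k : ℕ}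
    {s : ℝ} (hks : b (k + 1) ≤ s) (hsk : s ≤ b k) :
    μ.real (Icc (b (k + 1)) s) ≤ P * (s - b (k + 1)) ^ h + gap b (k + 1) ^ h * D := by
  have hgap := hb.gap_pos k.succ_ne_zero
  have hs := sub_nonneg.2 hks
  have hmirror : 1 - (s - b (k + 1)) / gap b (k + 1) = (b k - s) / gap b (k + 1) := by
    rw [one_sub_div hgap.ne', gap_succ, sub_sub_sub_cancel_right]
  refine hμ.measureReal_le_of_preimage_le hb measurableSet_Icc hs (Icc_subset_Icc_right hsk)
    (le_trans ?_ (hright _ (div_nonneg hs hgap.le)))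
  rw [hb.gAff_preimage_Icc, hmirror]
  exact measureReal_mono Icc_subset_Ici_self

lemma measureReal_Icc_right_le [IsFiniteMeasure μ] (hμ : IsMoranMeasure b h n μ)
    (hb : IsPartitionSeq b) (hleft : ∀ u, 0 ≤ u → μ.real (Iic u) ≤ P * u ^ h + D) {k : ℕ}
    {s : ℝ} (hks : b (k + 1) ≤ s) (hsk : s ≤ b k) :
    μ.real (Icc s (b k)) ≤ P * (b k - s) ^ h + gap b (k + 1) ^ h * D := by
  have hs := sub_nonneg.2 hsk
  refine hμ.measureReal_le_of_preimage_le hb measurableSet_Icc hs (Icc_subset_Icc_left hks)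
    (le_trans ?_ (hleft _ (div_nonneg hs (hb.gap_nonneg _))))
  rw [hb.gAff_preimage_Icc]
  exact measureReal_mono Icc_subset_Iic_self

lemma measureReal_Icc_le_of_same_piece (hμ : IsMoranMeasure b h n μ) (hb : IsPartitionSeq b)
    (hIcc : ∀ x y, x ≤ y → μ.real (Icc x y) ≤ P * (y - x) ^ h + D) {k : ℕ} {x y : ℝ}
    (hkx : b (k + 1) ≤ x) (hxy : x ≤ y) (hyk : y ≤ b k) :
    μ.real (Icc x y) ≤ P * (y - x) ^ h + gap b (k + 1) ^ h * D := by
  have hgap := hb.gap_pos k.succ_ne_zero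
  refine hμ.measureReal_le_of_preimage_le hb measurableSet_Icc (sub_nonneg.2 hxy)
    (Icc_subset_Icc hkx hyk) ?_
  rw [hb.gAff_preimage_Icc, ← sub_sub_sub_cancel_left x y (b k), sub_div (b k - x)]
  exact hIcc _ _ (by gcongr)

lemma measureReal_Ici_le_Icc [IsFiniteMeasure μ] (hμ : IsMoranMeasure b h n μ)
    (hb : IsPartitionSeq b) (s : ℝ) : μ.real (Ici s) ≤ μ.real (Icc s 1) := by
  have hnull : μ.real (Ioi 1) = 0 :=
    hμ.measureReal_eq_zero hb (disjoint_left.2 fun x hx hx01 ↦ lt_asymm hx hx01.2)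
  have hcover : Ici s ⊆ Icc s 1 ∪ Ioi 1 :=
    fun x hx ↦ (le_or_gt x 1).imp (fun hx1 ↦ ⟨hx, hx1⟩) id
  simpa [hnull] using (measureReal_mono hcover).trans (measureReal_union_le (μ := μ) _ _)

lemma measureReal_Iic_le_of_Ici_le [IsProbabilityMeasure μ] (hμ : IsMoranMeasure b h n μ)
    (hb : IsPartitionSeq b) (ht : HasGapRatio b t) (hn : 1 ≤ n) (h0 : 0 < h) (h1 : h ≤ 1)
    (hD : 0 ≤ D) (hright : ∀ u, 0 ≤ u → μ.real (Ici (1 - u)) ≤ massConst n t h * u ^ h + D)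
    {s : ℝ} (hs : 0 ≤ s) : μ.real (Iic s) ≤ massConst n t h * s ^ h + t ^ h * D := by
  have ht0 := hb.ratio_nonneg ht
  have hDt : 0 ≤ t ^ h * D := by positivity
  rcases hs.eq_or_lt with rfl | hs0
  · rw [hμ.measureReal_eq_zero hb (by simp +contextual [disjoint_left, not_lt])]
    have := one_le_massConst hn ht0 ht.lt_one h0 h1
    positivity
  rcases le_total 1 s with hs1 | hs1
  · exact (measureReal_le_massConst_mul_rpow hn ht0 ht.lt_one h0 h1 hs1).trans
      (le_add_of_nonneg_right hDt)
  obtain ⟨m, hms, hsm⟩ := hb.exists_lt_le hs0 hs1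
  have hlast := hμ.measureReal_Icc_left_le hb hright hms.le hsm
  have hblock := hμ.measureReal_Iic_le_rpow hb h0 h1 (m + 1)
  have hratio : b (m + 1) ^ h + ratioConst t h * (s - b (m + 1)) ^ h ≤ ratioConst t h * s ^ h := by
    have := rpow_add_ratioConst_mul_rpow_le (hb.pos (m + 1)) (sub_nonneg.2 hms.le) (t := t)
      (by nlinarith [ht.sub_le m, ht.lt_one]) ht.lt_one h0 h1
    rwa [add_sub_cancel] at this
  calc
    μ.real (Iic s) ≤ μ.real (Iic (b (m + 1))) + μ.real (Icc (b (m + 1)) s) :=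
      (measureReal_mono (fun x hx ↦ (le_total x (b (m + 1))).imp id fun hmx ↦ ⟨hmx, hx⟩)).trans
        (measureReal_union_le _ _)
    _ ≤ n ^ (1 - h) * (b (m + 1) ^ h + ratioConst t h * (s - b (m + 1)) ^ h) + t ^ h * D := by
      rw [massConst] at hlast
      linarith [hb.gap_rpow_mul_le ht h0 hD (m + 1)]
    _ ≤ n ^ (1 - h) * (ratioConst t h * s ^ h) + t ^ h * D := by gcongr
    _ = massConst n t h * s ^ h + t ^ h * D := by rw [massConst, mul_assoc]

lemma measureReal_Ici_le_of_Iic_le [IsProbabilityMeasure μ] (hμ : IsMoranMeasure b h n μ)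
    (hb : IsPartitionSeq b) (ht : HasGapRatio b t) (hn : 1 ≤ n) (h0 : 0 < h) (h1 : h ≤ 1)
    (hD : 0 ≤ D) (hleft : ∀ s, 0 ≤ s → μ.real (Iic s) ≤ massConst n t h * s ^ h + D)
    {u : ℝ} (hu : 0 ≤ u) : μ.real (Ici (1 - u)) ≤ massConst n t h * u ^ h + t ^ h * D := by
  have ht0 := hb.ratio_nonneg ht
  have hDt : 0 ≤ t ^ h * D := by positivity
  rcases le_or_gt 1 u with hu1 | hu1
  · exact (measureReal_le_massConst_mul_rpow hn ht0 ht.lt_one h0 h1 hu1).trans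
      (le_add_of_nonneg_right hDt)
  refine (hμ.measureReal_Ici_le_Icc hb (1 - u)).trans ?_
  obtain ⟨m, hms, hsm⟩ := hb.exists_lt_le (sub_pos.2 hu1) (sub_le_self 1 hu)
  have hfirst := hμ.measureReal_Icc_right_le hb hleft hms.le hsm
  rcases m.eq_zero_or_pos with rfl | hm
  · rw [hb.zero, sub_sub_cancel] at hfirst
    linarith [hb.gap_rpow_mul_le ht h0 hD 1]
  have hblock := hμ.measureReal_Icc_le_rpow hb h0 h1 m.zero_le
  rw [hb.zero] at hblock
  have hbm : b m ≤ t := (hb.strictAnti.antitone hm).trans ht.b_one_le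
  have hratio : (1 - b m) ^ h + ratioConst t h * (b m - (1 - u)) ^ h ≤ ratioConst t h * u ^ h := by
    have := rpow_add_ratioConst_mul_rpow_le (sub_pos.2 (hbm.trans_lt ht.lt_one))
      (sub_nonneg.2 hsm) (t := t) (by nlinarith [hb.pos (m + 1), ht.lt_one]) ht.lt_one h0 h1
    rwa [show 1 - b m + (b m - (1 - u)) = u by ring] at this
  calc
    μ.real (Icc (1 - u) 1) ≤ μ.real (Icc (1 - u) (b m)) + μ.real (Icc (b m) 1) :=
      (measureReal_mono Icc_subset_Icc_union_Icc).trans (measureReal_union_le _ _)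
    _ ≤ n ^ (1 - h) * ((1 - b m) ^ h + ratioConst t h * (b m - (1 - u)) ^ h) + t ^ h * D := by
      rw [massConst] at hfirst
      linarith [hb.gap_rpow_mul_le ht h0 hD (m + 1)]
    _ ≤ n ^ (1 - h) * (ratioConst t h * u ^ h) + t ^ h * D := by gcongr
    _ = massConst n t h * u ^ h + t ^ h * D := by rw [massConst, mul_assoc]

lemma measureReal_Iic_and_Ici_le_add_pow [IsProbabilityMeasure μ] (hμ : IsMoranMeasure b h n μ)
    (hb : IsPartitionSeq b) (ht : HasGapRatio b t) (hn : 1 ≤ n) (h0 : 0 < h) (h1 : h ≤ 1) (l : ℕ) :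
    (∀ s, 0 ≤ s → μ.real (Iic s) ≤ massConst n t h * s ^ h + (t ^ h) ^ l) ∧
      ∀ u, 0 ≤ u → μ.real (Ici (1 - u)) ≤ massConst n t h * u ^ h + (t ^ h) ^ l := by
  have ht0 := hb.ratio_nonneg ht
  have hmass := one_le_massConst hn ht0 ht.lt_one h0 h1
  induction l with
  | zero =>
    have htrivial : ∀ (F : Set ℝ) (s : ℝ), 0 ≤ s → μ.real F ≤ massConst n t h * s ^ h + 1 :=
      fun F s hs ↦ measureReal_le_one.trans (le_add_of_nonneg_left (by positivity))
    simpa only [pow_zero] using ⟨fun s ↦ htrivial _ s, fun u ↦ htrivial _ u⟩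
  | succ l ih =>
    simp only [pow_succ']
    exact ⟨fun s hs ↦ hμ.measureReal_Iic_le_of_Ici_le hb ht hn h0 h1 (by positivity) ih.2 hs,
      fun u hu ↦ hμ.measureReal_Ici_le_of_Iic_le hb ht hn h0 h1 (by positivity) ih.1 hu⟩

lemma measureReal_Iic_le [IsProbabilityMeasure μ] (hμ : IsMoranMeasure b h n μ)
    (hb : IsPartitionSeq b) (ht : HasGapRatio b t) (hn : 1 ≤ n) (h0 : 0 < h) (h1 : h ≤ 1)
    {s : ℝ} (hs : 0 ≤ s) : μ.real (Iic s) ≤ massConst n t h * s ^ h :=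
  have ht0 := hb.ratio_nonneg ht
  le_of_forall_le_add_pow (Real.rpow_nonneg ht0 h) (Real.rpow_lt_one ht0 ht.lt_one h0)
    fun l ↦ (hμ.measureReal_Iic_and_Ici_le_add_pow hb ht hn h0 h1 l).1 s hs

lemma measureReal_Ici_one_sub_le [IsProbabilityMeasure μ] (hμ : IsMoranMeasure b h n μ)
    (hb : IsPartitionSeq b) (ht : HasGapRatio b t) (hn : 1 ≤ n) (h0 : 0 < h) (h1 : h ≤ 1)
    {u : ℝ} (hu : 0 ≤ u) : μ.real (Ici (1 - u)) ≤ massConst n t h * u ^ h :=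
  have ht0 := hb.ratio_nonneg ht
  le_of_forall_le_add_pow (Real.rpow_nonneg ht0 h) (Real.rpow_lt_one ht0 ht.lt_one h0)
    fun l ↦ (hμ.measureReal_Iic_and_Ici_le_add_pow hb ht hn h0 h1 l).2 u hu

lemma measureReal_Icc_le_of_lt_piece [IsProbabilityMeasure μ] (hμ : IsMoranMeasure b h n μ)
    (hb : IsPartitionSeq b) (ht : HasGapRatio b t) (hn : 1 ≤ n) (h0 : 0 < h) (h1 : h ≤ 1)
    {i j : ℕ} {x y : ℝ} (hji : j < i) (hix : b (i + 1) ≤ x) (hxi : x ≤ b i) (hjy : b (j + 1) ≤ y)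
    (hyj : y ≤ b j) : μ.real (Icc x y) ≤ 3 ^ (1 - h) * massConst n t h * (y - x) ^ h := by
  have ht0 := hb.ratio_nonneg ht
  have hmass := one_le_massConst hn ht0 ht.lt_one h0 h1
  have hbij : b i ≤ b (j + 1) := hb.strictAnti.antitone hji
  have hlow : μ.real (Icc x (b i)) ≤ massConst n t h * (b i - x) ^ h := by
    simpa using hμ.measureReal_Icc_right_le hb (D := 0)
      (by simpa using fun s ↦ hμ.measureReal_Iic_le hb ht hn h0 h1) hix hxi
  have hmiddle : μ.real (Icc (b i) (b (j + 1))) ≤ massConst n t h * (b (j + 1) - b i) ^ h := by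
    refine (hμ.measureReal_Icc_le_rpow hb h0 h1 hji).trans ?_
    have := Real.rpow_nonneg (sub_nonneg.2 hbij) h
    gcongr
    exact rpow_le_massConst ht0 ht.lt_one h0 h1
  have hhigh : μ.real (Icc (b (j + 1)) y) ≤ massConst n t h * (y - b (j + 1)) ^ h := by
    simpa using hμ.measureReal_Icc_left_le hb (D := 0)
      (by simpa using fun s ↦ hμ.measureReal_Ici_one_sub_le hb ht hn h0 h1) hjy hyj
  have hcover : Icc x y ⊆ Icc x (b i) ∪ Icc (b i) (b (j + 1)) ∪ Icc (b (j + 1)) y := by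
    rw [Icc_union_Icc_eq_Icc hxi hbij, Icc_union_Icc_eq_Icc (hxi.trans hbij) hjy]
  have hpow := add_rpow_add_rpow_le (sub_nonneg.2 hxi) (sub_nonneg.2 hbij) (sub_nonneg.2 hjy) h0 h1
  rw [show b i - x + (b (j + 1) - b i) + (y - b (j + 1)) = y - x by ring] at hpow
  calc
    μ.real (Icc x y)
        ≤ μ.real (Icc x (b i)) + μ.real (Icc (b i) (b (j + 1))) + μ.real (Icc (b (j + 1)) y) := by
      refine (measureReal_mono hcover).trans ((measureReal_union_le _ _).trans ?_)
      gcongr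
      exact measureReal_union_le _ _
    _ ≤ massConst n t h * ((b i - x) ^ h + (b (j + 1) - b i) ^ h + (y - b (j + 1)) ^ h) := by
      linarith
    _ ≤ massConst n t h * (3 ^ (1 - h) * (y - x) ^ h) := by gcongr
    _ = 3 ^ (1 - h) * massConst n t h * (y - x) ^ h := by ring

lemma measureReal_Icc_le_of_nonpos [IsProbabilityMeasure μ] (hμ : IsMoranMeasure b h n μ)
    (hb : IsPartitionSeq b) (ht : HasGapRatio b t) (hn : 1 ≤ n) (h0 : 0 < h) (h1 : h ≤ 1)
    {x y : ℝ} (hxy : x ≤ y) (hx : x ≤ 0) :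
    μ.real (Icc x y) ≤ 3 ^ (1 - h) * massConst n t h * (y - x) ^ h := calc
  μ.real (Icc x y) ≤ μ.real (Iic (max y 0)) :=
    measureReal_mono fun _ hz ↦ hz.2.trans (le_max_left y 0)
  _ ≤ massConst n t h * max y 0 ^ h := hμ.measureReal_Iic_le hb ht hn h0 h1 (le_max_right y 0)
  _ ≤ 3 ^ (1 - h) * massConst n t h * (y - x) ^ h :=
    massConst_mul_rpow_le hn (hb.ratio_nonneg ht) ht.lt_one h0 h1 (le_max_right y 0)
      (max_le (by linarith) (by linarith))

lemma measureReal_Icc_le_of_one_le [IsProbabilityMeasure μ] (hμ : IsMoranMeasure b h n μ)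
    (hb : IsPartitionSeq b) (ht : HasGapRatio b t) (hn : 1 ≤ n) (h0 : 0 < h) (h1 : h ≤ 1)
    {x y : ℝ} (hxy : x ≤ y) (hy : 1 ≤ y) :
    μ.real (Icc x y) ≤ 3 ^ (1 - h) * massConst n t h * (y - x) ^ h := calc
  μ.real (Icc x y) ≤ μ.real (Ici (1 - max (1 - x) 0)) :=
    measureReal_mono fun _ hz ↦ (sub_le_comm.1 (le_max_left (1 - x) 0)).trans hz.1
  _ ≤ massConst n t h * max (1 - x) 0 ^ h :=
    hμ.measureReal_Ici_one_sub_le hb ht hn h0 h1 (le_max_right _ 0)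
  _ ≤ 3 ^ (1 - h) * massConst n t h * (y - x) ^ h :=
    massConst_mul_rpow_le hn (hb.ratio_nonneg ht) ht.lt_one h0 h1 (le_max_right _ 0)
      (max_le (by linarith) (by linarith))

lemma measureReal_Icc_le_of_forall_Icc_le [IsProbabilityMeasure μ] (hμ : IsMoranMeasure b h n μ)
    (hb : IsPartitionSeq b) (ht : HasGapRatio b t) (hn : 1 ≤ n) (h0 : 0 < h) (h1 : h ≤ 1)
    (hD : 0 ≤ D)
    (hIcc : ∀ x y, x ≤ y → μ.real (Icc x y) ≤ 3 ^ (1 - h) * massConst n t h * (y - x) ^ h + D)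
    {x y : ℝ} (hxy : x ≤ y) :
    μ.real (Icc x y) ≤ 3 ^ (1 - h) * massConst n t h * (y - x) ^ h + t ^ h * D := by
  have ht0 := hb.ratio_nonneg ht
  have hDt : 0 ≤ t ^ h * D := by positivity
  rcases le_or_gt x 0 with hx0 | hx0
  · exact (hμ.measureReal_Icc_le_of_nonpos hb ht hn h0 h1 hxy hx0).trans
      (le_add_of_nonneg_right hDt)
  rcases le_or_gt 1 y with hy1 | hy1
  · exact (hμ.measureReal_Icc_le_of_one_le hb ht hn h0 h1 hxy hy1).trans
      (le_add_of_nonneg_right hDt)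
  obtain ⟨i, hix, hxi⟩ := hb.exists_lt_le hx0 (hxy.trans hy1.le)
  obtain ⟨j, hjy, hyj⟩ := hb.exists_lt_le (hx0.trans_le hxy) hy1.le
  have hji : j ≤ i := by
    have := hb.strictAnti.lt_iff_gt.1 (hix.trans_le (hxy.trans hyj))
    lia
  rcases hji.eq_or_lt with rfl | hji
  · exact (hμ.measureReal_Icc_le_of_same_piece hb hIcc hix.le hxy hyj).trans
      (add_le_add_right (hb.gap_rpow_mul_le ht h0 hD (j + 1)) _)
  · exact (hμ.measureReal_Icc_le_of_lt_piece hb ht hn h0 h1 hji hix.le hxi hjy.le hyj).trans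
      (le_add_of_nonneg_right hDt)

theorem measureReal_Icc_le [IsProbabilityMeasure μ] (hμ : IsMoranMeasure b h n μ)
    (hb : IsPartitionSeq b) (ht : HasGapRatio b t) (hn : 1 ≤ n) (h0 : 0 < h) (h1 : h ≤ 1)
    {x y : ℝ} (hxy : x ≤ y) :
    μ.real (Icc x y) ≤ 3 ^ (1 - h) * massConst n t h * (y - x) ^ h := by
  have ht0 := hb.ratio_nonneg ht
  have hmass := one_le_massConst hn ht0 ht.lt_one h0 h1
  have hiterate : ∀ (l : ℕ) (x y : ℝ), x ≤ y →
      μ.real (Icc x y) ≤ 3 ^ (1 - h) * massConst n t h * (y - x) ^ h + (t ^ h) ^ l := by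
    intro l
    induction l with
    | zero =>
      intro x y hxy
      have := sub_nonneg.2 hxy
      rw [pow_zero]
      exact measureReal_le_one.trans (le_add_of_nonneg_left (by positivity))
    | succ l ih =>
      intro x y hxy
      rw [pow_succ']
      exact hμ.measureReal_Icc_le_of_forall_Icc_le hb ht hn h0 h1 (by positivity) ih hxy
  exact le_of_forall_le_add_pow (Real.rpow_nonneg ht0 h) (Real.rpow_lt_one ht0 ht.lt_one h0)
    fun l ↦ hiterate l x y hxy

end IsMoranMeasure

theorem inv_le_hausdorffMeasure_limitSet (hb : IsPartitionSeq b) (ht : HasGapRatio b t)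
    (hn : 1 ≤ n) (h0 : 0 < h) (h1 : h ≤ 1) (hmoran : ∑ k ∈ Finset.Icc 1 n, gap b k ^ h = 1) :
    ENNReal.ofReal (3 ^ (1 - h) * massConst n t h)⁻¹ ≤ μH[h] (limitSet (gAff b) n) := by
  obtain ⟨μ, hprob, hμ⟩ := exists_isSelfSimilar (hb.isContractingSystem_gAff ht)
    (fun k ↦ Real.rpow_nonneg (hb.gap_nonneg k) h) hmoran
  have hmass := one_le_massConst hn (hb.ratio_nonneg ht) ht.lt_one h0 h1
  have hfull : μ (limitSet (gAff b) n) = 1 :=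
    (prob_compl_eq_zero_iff (measurableSet_limitSet (continuous_gAff b) n)).1
      hμ.measure_compl_limitSet
  have hle := smul_le_hausdorffMeasure_of_measureReal_Icc_le (by positivity) h0.le
    (fun x y ↦ IsMoranMeasure.measureReal_Icc_le hμ hb ht hn h0 h1) (limitSet (gAff b) n)
  simpa [hfull] using hle

end MassEstimates

section Asymptotics

variable {b : ℕ → ℝ}

lemma tendsto_of_tendsto_one_sub_mul_log {h : ℕ → ℝ}
    (hC1 : Tendsto (fun n : ℕ ↦ (1 - h n) * Real.log n) atTop (𝓝 0)) :
    Tendsto h atTop (𝓝 1) := by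
  have hlog : Tendsto (fun n : ℕ ↦ Real.log n) atTop atTop :=
    Real.tendsto_log_atTop.comp tendsto_natCast_atTop_atTop
  have hquot : Tendsto (fun n ↦ 1 - (1 - h n) * Real.log n / Real.log n) atTop (𝓝 1) := by
    simpa using (hC1.div_atTop hlog).const_sub 1
  refine hquot.congr' ((hlog.eventually_ne_atTop 0).mono fun n hn ↦ ?_)
  rw [mul_div_cancel_right₀ _ hn, sub_sub_cancel]

lemma tendsto_ratioConst {t : ℝ} (ht0 : 0 < t) (ht : t < 1) :
    Tendsto (ratioConst t) (𝓝 1) (𝓝 1) := by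
  have hpow : ∀ {x : ℝ}, 0 < x → Tendsto (fun h : ℝ ↦ x ^ h) (𝓝 1) (𝓝 x) := fun {x} hx ↦ by
    simpa using (Real.continuous_const_rpow hx.ne').tendsto 1
  have ht' := sub_pos.2 ht
  have hquot := (hpow ht').div ((hpow ht0).const_sub 1) ht'.ne'
  rw [div_self ht'.ne'] at hquot
  exact hquot

lemma tendsto_massConst {t : ℝ} (ht0 : 0 < t) (ht : t < 1) {h : ℕ → ℝ}
    (hC1 : Tendsto (fun n : ℕ ↦ (1 - h n) * Real.log n) atTop (𝓝 0)) :
    Tendsto (fun n ↦ massConst n t (h n)) atTop (𝓝 1) := by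
  have hpow : Tendsto (fun n : ℕ ↦ (n : ℝ) ^ (1 - h n)) atTop (𝓝 1) := by
    refine (Real.exp_zero ▸ (Real.continuous_exp.tendsto 0).comp hC1).congr' ?_
    filter_upwards [eventually_gt_atTop 0] with n hn
    rw [Function.comp_apply, Real.rpow_def_of_pos (by exact_mod_cast hn), mul_comm]
  simpa [massConst] using
    hpow.mul ((tendsto_ratioConst ht0 ht).comp (tendsto_of_tendsto_one_sub_mul_log hC1))

namespace IsPartitionSeq

variable {h h' : ℝ} {m n : ℕ}

lemma exponent_le_one (hb : IsPartitionSeq b)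
    (hmoran : ∑ k ∈ Finset.Icc 1 n, gap b k ^ h = 1) : h ≤ 1 := by
  by_contra! h1
  have hlt : ∑ k ∈ Finset.Icc 1 n, gap b k ^ h < 1 := calc
    ∑ k ∈ Finset.Icc 1 n, gap b k ^ h ≤ ∑ k ∈ Finset.Icc 1 n, gap b k :=
      Finset.sum_le_sum fun k _ ↦
        Real.rpow_le_self_of_le_one (hb.gap_nonneg k) (hb.gap_lt_one k).le h1.le
    _ = 1 - b n := by rw [← hb.zero, ← sum_Ioc_gap b n.zero_le]; rfl
    _ < 1 := sub_lt_self 1 (hb.pos n)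
  exact hlt.ne hmoran

lemma exponent_pos (hb : IsPartitionSeq b) (hn : 2 ≤ n)
    (hmoran : ∑ k ∈ Finset.Icc 1 n, gap b k ^ h = 1) : 0 < h := by
  by_contra! h0
  have hterm : ∀ k ∈ Finset.Icc 1 n, 1 ≤ gap b k ^ h := fun k hk ↦
    Real.one_le_rpow_of_pos_of_le_one_of_nonpos
      (hb.gap_pos (Nat.one_le_iff_ne_zero.1 (Finset.mem_Icc.1 hk).1)) (hb.gap_lt_one k).le h0
  have hcard : (n : ℝ) ≤ 1 := by simpa [hmoran] using Finset.card_nsmul_le_sum _ _ _ hterm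
  exact absurd (by exact_mod_cast hcard) (not_le.2 hn)

lemma exponent_mono (hb : IsPartitionSeq b) (hmn : m ≤ n)
    (hm : ∑ k ∈ Finset.Icc 1 m, gap b k ^ h = 1) (hn : ∑ k ∈ Finset.Icc 1 n, gap b k ^ h' = 1) :
    h ≤ h' := by
  by_contra! hlt
  have hnonempty : (Finset.Icc 1 m).Nonempty :=
    Finset.nonempty_of_sum_ne_zero (hm.trans_ne one_ne_zero)
  refine (lt_irrefl (1 : ℝ)) ?_
  calc
    1 = ∑ k ∈ Finset.Icc 1 m, gap b k ^ h := hm.symm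
    _ < ∑ k ∈ Finset.Icc 1 m, gap b k ^ h' :=
      Finset.sum_lt_sum_of_nonempty hnonempty fun k hk ↦
        Real.rpow_lt_rpow_of_exponent_gt
          (hb.gap_pos (Nat.one_le_iff_ne_zero.1 (Finset.mem_Icc.1 hk).1)) (hb.gap_lt_one k) hlt
    _ ≤ ∑ k ∈ Finset.Icc 1 n, gap b k ^ h' :=
      Finset.sum_le_sum_of_subset_of_nonneg (Finset.Icc_subset_Icc_right hmn)
        fun k _ _ ↦ Real.rpow_nonneg (hb.gap_nonneg k) h'
    _ = 1 := hn

end IsPartitionSeq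

theorem tendsto_hausdorffMeasure_limitSet {h : ℕ → ℝ} (hb : IsPartitionSeq b)
    (hmoran : ∀ n, 1 ≤ n → ∑ k ∈ Finset.Icc 1 n, gap b k ^ h n = 1)
    (hC1 : Tendsto (fun n : ℕ ↦ (1 - h n) * Real.log n) atTop (𝓝 0))
    (hC2 : ∃ M : ℝ, ∀ k, (b k - b (k + 1)) / b (k + 1) ≤ M) :
    Tendsto (fun n ↦ μH[h n] (limitSet (gAff b) n)) atTop (𝓝 1) := by
  obtain ⟨t, ht⟩ := hb.exists_hasGapRatio hC2
  have ht0 : 0 < t := (hb.pos 1).trans_le ht.b_one_le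
  have hthree : Tendsto (fun n ↦ (3 : ℝ) ^ (1 - h n)) atTop (𝓝 1) := by
    simpa [Function.comp_def] using ((Real.continuous_const_rpow three_ne_zero).tendsto _).comp
      ((tendsto_of_tendsto_one_sub_mul_log hC1).const_sub 1)
  have hlower : Tendsto (fun n ↦ ENNReal.ofReal (3 ^ (1 - h n) * massConst n t (h n))⁻¹)
      atTop (𝓝 1) := by
    simpa using ENNReal.tendsto_ofReal
      ((hthree.mul (tendsto_massConst ht0 ht.lt_one hC1)).inv₀ (by norm_num))
  refine tendsto_of_tendsto_of_tendsto_of_le_of_le' hlower tendsto_const_nhds ?_ ?_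
  all_goals
    filter_upwards [eventually_ge_atTop 2] with n hn
    have hn1 : 1 ≤ n := by lia
    have h0 := hb.exponent_pos hn (hmoran n hn1)
  · exact inv_le_hausdorffMeasure_limitSet hb ht hn1 h0 (hb.exponent_le_one (hmoran n hn1))
      (hmoran n hn1)
  · exact hausdorffMeasure_limitSet_le_one ht.lt_one h0.le hb.gap_nonneg (hb.gap_le ht)
      (fun k x y ↦ (dist_gAff b k x y).le.trans_eq (by rw [abs_of_nonneg (hb.gap_nonneg k)]))
      (hmoran n hn1)

end Asymptotics

section GeometricSequence

lemma add_mul_negMulLog_le_rpow {x : ℝ} (hx : 0 < x) (h : ℝ) :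
    x + (1 - h) * Real.negMulLog x ≤ x ^ h := calc
  x + (1 - h) * Real.negMulLog x = x * (Real.log x * (h - 1) + 1) := by rw [Real.negMulLog]; ring
  _ ≤ x * Real.exp (Real.log x * (h - 1)) := by gcongr; exact Real.add_one_le_exp _
  _ = x ^ h := by rw [← Real.rpow_def_of_pos hx, Real.rpow_sub_one hx.ne', mul_div_cancel₀ _ hx.ne']

variable {q : ℝ}

lemma isPartitionSeq_pow (hq0 : 0 < q) (hq1 : q < 1) : IsPartitionSeq (fun k ↦ q ^ k) where
  strictAnti := pow_right_strictAnti₀ hq0 hq1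
  zero := pow_zero q
  tendsto_zero := tendsto_pow_atTop_nhds_zero_of_lt_one hq0.le hq1

lemma gap_pow_rpow (hq0 : 0 ≤ q) (hq1 : q ≤ 1) (h : ℝ) (k : ℕ) :
    gap (fun k ↦ q ^ k) (k + 1) ^ h = (1 - q) ^ h * (q ^ h) ^ k := by
  rw [gap_succ, show q ^ k - q ^ (k + 1) = (1 - q) * q ^ k by ring,
    Real.mul_rpow (sub_nonneg.2 hq1) (pow_nonneg hq0 k), Real.rpow_pow_comm hq0]

lemma one_sub_rpow_eq_of_sum_gap_pow {h : ℝ} {n : ℕ} (hq0 : 0 ≤ q) (hq1 : q ≤ 1)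
    (hmoran : ∑ k ∈ Finset.Icc 1 n, gap (fun k ↦ q ^ k) k ^ h = 1) :
    1 - q ^ h = (1 - q) ^ h * (1 - (q ^ h) ^ n) := by
  have hgeom : (1 - q) ^ h * ∑ k ∈ Finset.range n, (q ^ h) ^ k = 1 := by
    rw [← Finset.Ico_add_one_right_eq_Icc, Finset.sum_Ico_eq_sum_range] at hmoran
    simpa only [add_comm 1, Nat.add_sub_cancel, gap_pow_rpow hq0 hq1, ← Finset.mul_sum] using hmoran
  rw [← mul_neg_geom_sum, mul_left_comm, hgeom, mul_one]

lemma one_sub_mul_binEntropy_le {h : ℝ} {n : ℕ} (hq0 : 0 < q) (hq1 : q < 1) (h0 : 0 ≤ h)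
    (hmoran : ∑ k ∈ Finset.Icc 1 n, gap (fun k ↦ q ^ k) k ^ h = 1) :
    (1 - h) * Real.binEntropy q ≤ (q ^ h) ^ n := by
  have hq1' := sub_pos.2 hq1
  have hpow : (1 - q) ^ h * (q ^ h) ^ n ≤ (q ^ h) ^ n :=
    mul_le_of_le_one_left (by positivity) (Real.rpow_le_one hq1'.le (by linarith) h0)
  rw [Real.binEntropy_eq_negMulLog_add_negMulLog_one_sub]
  linarith [one_sub_rpow_eq_of_sum_gap_pow hq0.le hq1.le hmoran, add_mul_negMulLog_le_rpow hq0 h,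
    add_mul_negMulLog_le_rpow hq1' h]

lemma tendsto_one_sub_mul_log_of_pow {h : ℕ → ℝ} (hq0 : 0 < q) (hq1 : q < 1)
    (hmoran : ∀ n, 1 ≤ n → ∑ k ∈ Finset.Icc 1 n, gap (fun k ↦ q ^ k) k ^ h n = 1) :
    Tendsto (fun n : ℕ ↦ (1 - h n) * Real.log n) atTop (𝓝 0) := by
  have hb := isPartitionSeq_pow hq0 hq1
  have hentropy := Real.binEntropy_pos hq0 hq1
  have hdecay : Tendsto (fun n : ℕ ↦ n * (q ^ h 2) ^ n / Real.binEntropy q) atTop (𝓝 0) := by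
    simpa using (tendsto_self_mul_const_pow_of_lt_one (Real.rpow_nonneg hq0.le (h 2))
      (Real.rpow_lt_one hq0.le hq1 (hb.exponent_pos le_rfl (hmoran 2 one_le_two)))).div_const
      (Real.binEntropy q)
  refine squeeze_zero' ?_ ?_ hdecay
  all_goals
    filter_upwards [eventually_ge_atTop 2] with n hn
    have hmoran_n := hmoran n (by lia)
    have h1 := sub_nonneg.2 (hb.exponent_le_one hmoran_n)
  · exact mul_nonneg h1 (Real.log_natCast_nonneg n)
  have hdefect : (1 - h n) * Real.binEntropy q ≤ (q ^ h 2) ^ n := calc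
    (1 - h n) * Real.binEntropy q ≤ (q ^ h n) ^ n :=
      one_sub_mul_binEntropy_le hq0 hq1 (hb.exponent_pos hn hmoran_n).le hmoran_n
    _ ≤ (q ^ h 2) ^ n := pow_le_pow_left₀ (by positivity)
      (Real.rpow_le_rpow_of_exponent_ge hq0 hq1.le
        (hb.exponent_mono hn (hmoran 2 one_le_two) hmoran_n)) n
  calc
    (1 - h n) * Real.log n ≤ (1 - h n) * n := by gcongr; exact Real.log_le_self n.cast_nonneg
    _ = n * ((1 - h n) * Real.binEntropy q) / Real.binEntropy q := by field_simp
    _ ≤ n * (q ^ h 2) ^ n / Real.binEntropy q := by gcongr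

lemma pow_sub_pow_succ_div (hq0 : q ≠ 0) (k : ℕ) :
    (q ^ k - q ^ (k + 1)) / q ^ (k + 1) = (1 - q) / q := by
  rw [pow_succ]
  field_simp

end GeometricSequence

/-- For `b_k = q^k` with `0 < q < 1`, conditions (C1) and (C2) hold, and consequently
    `lim_{n→∞} H_{h_n}(J_n) = 1`. -/
theorem geometric_example
    (q : ℝ) (hq0 : 0 < q) (hq1 : q < 1)
    (b : ℕ → ℝ) (h : ℕ → ℝ)
    (hb : ∀ k : ℕ, b k = q ^ k)
    (hmoran : ∀ n, 1 ≤ n → ∑ k ∈ Finset.Icc 1 n, (b (k - 1) - b k) ^ h n = 1)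
    (hdimH : ∀ n, 1 ≤ n → dimH (limitSet (gAff b) n) = ENNReal.ofReal (h n)) :
    Filter.Tendsto (fun n : ℕ => (1 - h n) * Real.log n) Filter.atTop (nhds 0) ∧
    (∃ M : ℝ, ∀ k : ℕ, (b k - b (k + 1)) / b (k + 1) ≤ M) ∧
    Filter.Tendsto (fun n : ℕ => μH[h n] (limitSet (gAff b) n)) Filter.atTop (nhds 1) := by
  obtain rfl : b = fun k ↦ q ^ k := funext hb
  have hC1 := tendsto_one_sub_mul_log_of_pow hq0 hq1 hmoran
  have hC2 : ∃ M : ℝ, ∀ k : ℕ, (q ^ k - q ^ (k + 1)) / q ^ (k + 1) ≤ M :=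
    ⟨(1 - q) / q, fun k ↦ (pow_sub_pow_succ_div hq0.ne' k).le⟩
  exact ⟨hC1, hC2, tendsto_hausdorffMeasure_limitSet (isPartitionSeq_pow hq0 hq1) hmoran hC1 hC2⟩
end
end

section
/- Let g_k : [0,1] → [0,1], k ≥ 1, be C² maps with g_k′ nonvanishing, such that there exist α < 1 and c > 0 with |g_k′(x)| < α and |g_k″(x)/g_k′(x)| < c for all k ≥ 1 and all x ∈ [0,1]. Then there is a constant D > 0 such that for every finite word ω = (i_1,…,i_m) ∈ ℕ^* and the composition g_ω = g_{i_1}∘g_{i_2}∘⋯∘g_{i_m}, and for all x, y ∈ [0,1], one has |g_ω′(x)|/|g_ω′(y)| ≤ 1 + (c/(1−α))·|x−y| + D·|x−y|². -/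
open Set Filter MeasureTheory Topology

noncomputable section

/-- The derivative `g_ω′(x)` of the composition along a word, computed by the chain rule. -/
def wordDeriv (g g' : ℕ → ℝ → ℝ) : List ℕ → ℝ → ℝ
  | [], _ => 1
  | k :: w, x => g' k (wordComp g w x) * wordDeriv g g' w x

/-!
A composition `g_v` along a word of length `n` contracts distances by `α ^ n`. By the chain rule,
`log |g_ω′|` is a sum of terms `log |g_k′| ∘ g_v` over the proper suffixes `v` of `ω`, and
`log |g_k′|` is `c`-Lipschitz because its derivative is `g_k″ / g_k′`. Summing the geometric series
shows that `log |g_ω′|` is `c / (1 - α)`-Lipschitz uniformly in `ω`. Exponentiating and expanding to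
second order gives the estimate.

Since `Real.log x = log |x|`, no absolute values are needed inside the logarithms.
-/

theorem exp_le_one_add_mul_exp (t : ℝ) : Real.exp t ≤ 1 + t * Real.exp t := by
  have h : (1 - t) * Real.exp t ≤ Real.exp (-t) * Real.exp t := by
    gcongr
    exact Real.one_sub_le_exp_neg t
  rw [← Real.exp_add, neg_add_cancel, Real.exp_zero] at h
  linarith

theorem exp_le_one_add_add_sq_mul_exp {t : ℝ} (ht : 0 ≤ t) :
    Real.exp t ≤ 1 + t + t ^ 2 * Real.exp t :=
  calc Real.exp t
      ≤ 1 + t * Real.exp t := exp_le_one_add_mul_exp t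
    _ ≤ 1 + t * (1 + t * Real.exp t) := by gcongr; exact exp_le_one_add_mul_exp t
    _ = 1 + t + t ^ 2 * Real.exp t := by ring

theorem exp_mul_le_one_add_add_mul_sq {K r R : ℝ} (hK : 0 ≤ K) (hr : 0 ≤ r) (hrR : r ≤ R) :
    Real.exp (K * r) ≤ 1 + K * r + K ^ 2 * Real.exp (K * R) * r ^ 2 :=
  calc Real.exp (K * r)
      ≤ 1 + K * r + (K * r) ^ 2 * Real.exp (K * r) :=
        exp_le_one_add_add_sq_mul_exp (mul_nonneg hK hr)
    _ ≤ 1 + K * r + (K * r) ^ 2 * Real.exp (K * R) := by gcongr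
    _ = 1 + K * r + K ^ 2 * Real.exp (K * R) * r ^ 2 := by ring

theorem abs_log_sub_log_le_of_abs_deriv_div_le {f f' : ℝ → ℝ} {s : Set ℝ} {c x y : ℝ}
    (hs : Convex ℝ s) (hf : ∀ z ∈ s, HasDerivWithinAt f (f' z) s z) (hne : ∀ z ∈ s, f z ≠ 0)
    (hbound : ∀ z ∈ s, |f' z / f z| ≤ c) (hx : x ∈ s) (hy : y ∈ s) :
    |Real.log (f x) - Real.log (f y)| ≤ c * |x - y| :=
  hs.norm_image_sub_le_of_norm_hasDerivWithin_le
    (fun z hz => (hf z hz).log (hne z hz)) hbound hy hx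

section Words

variable {g g' g'' : ℕ → ℝ → ℝ} {A : Set ℕ} {s : Set ℝ} {α c x y : ℝ} {w : List ℕ}

theorem mapsTo_wordComp_s9 (hmap : ∀ k ∈ A, MapsTo (g k) s s) (hw : ∀ i ∈ w, i ∈ A) :
    MapsTo (wordComp g w) s s := by
  induction w with
  | nil => exact mapsTo_id s
  | cons k w ih =>
    obtain ⟨hk, hw⟩ := List.forall_mem_cons.1 hw
    exact (hmap k hk).comp (ih hw)

theorem hasDerivWithinAt_wordComp (hmap : ∀ k ∈ A, MapsTo (g k) s s)
    (hg : ∀ k ∈ A, ∀ z ∈ s, HasDerivWithinAt (g k) (g' k z) s z)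
    (hw : ∀ i ∈ w, i ∈ A) (hx : x ∈ s) :
    HasDerivWithinAt (wordComp g w) (wordDeriv g g' w x) s x := by
  induction w with
  | nil => exact hasDerivWithinAt_id x s
  | cons k w ih =>
    obtain ⟨hk, hw⟩ := List.forall_mem_cons.1 hw
    have hmaps := mapsTo_wordComp_s9 hmap hw
    exact (hg k hk _ (hmaps hx)).comp x (ih hw) hmaps

theorem wordDeriv_ne_zero (hmap : ∀ k ∈ A, MapsTo (g k) s s)
    (hne : ∀ k ∈ A, ∀ z ∈ s, g' k z ≠ 0) (hw : ∀ i ∈ w, i ∈ A) (hx : x ∈ s) :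
    wordDeriv g g' w x ≠ 0 := by
  induction w with
  | nil => exact one_ne_zero
  | cons k w ih =>
    obtain ⟨hk, hw⟩ := List.forall_mem_cons.1 hw
    exact mul_ne_zero (hne k hk _ (mapsTo_wordComp_s9 hmap hw hx)) (ih hw)

theorem abs_wordDeriv_le_pow (hα₀ : 0 ≤ α) (hmap : ∀ k ∈ A, MapsTo (g k) s s)
    (hbound : ∀ k ∈ A, ∀ z ∈ s, |g' k z| ≤ α) (hw : ∀ i ∈ w, i ∈ A) (hx : x ∈ s) :
    |wordDeriv g g' w x| ≤ α ^ w.length := by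
  induction w with
  | nil => simp [wordDeriv]
  | cons k w ih =>
    obtain ⟨hk, hw⟩ := List.forall_mem_cons.1 hw
    rw [wordDeriv, abs_mul, List.length_cons, pow_succ']
    exact mul_le_mul (hbound k hk _ (mapsTo_wordComp_s9 hmap hw hx)) (ih hw) (abs_nonneg _) hα₀

theorem abs_wordComp_sub_le (hs : Convex ℝ s) (hα₀ : 0 ≤ α) (hmap : ∀ k ∈ A, MapsTo (g k) s s)
    (hg : ∀ k ∈ A, ∀ z ∈ s, HasDerivWithinAt (g k) (g' k z) s z)
    (hbound : ∀ k ∈ A, ∀ z ∈ s, |g' k z| ≤ α)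
    (hw : ∀ i ∈ w, i ∈ A) (hx : x ∈ s) (hy : y ∈ s) :
    |wordComp g w x - wordComp g w y| ≤ α ^ w.length * |x - y| :=
  hs.norm_image_sub_le_of_norm_hasDerivWithin_le
    (fun _ hz => hasDerivWithinAt_wordComp hmap hg hw hz)
    (fun _ hz => abs_wordDeriv_le_pow hα₀ hmap hbound hw hz) hy hx

theorem log_wordDeriv_cons {k : ℕ} (hmap : ∀ k ∈ A, MapsTo (g k) s s)
    (hne : ∀ k ∈ A, ∀ z ∈ s, g' k z ≠ 0) (hk : k ∈ A) (hw : ∀ i ∈ w, i ∈ A) (hx : x ∈ s) :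
    Real.log (wordDeriv g g' (k :: w) x) =
      Real.log (g' k (wordComp g w x)) + Real.log (wordDeriv g g' w x) :=
  Real.log_mul (hne k hk _ (mapsTo_wordComp_s9 hmap hw hx)) (wordDeriv_ne_zero hmap hne hw hx)

theorem abs_log_wordDeriv_sub_le_geom_sum (hs : Convex ℝ s) (hα₀ : 0 ≤ α) (hc : 0 ≤ c)
    (hmap : ∀ k ∈ A, MapsTo (g k) s s)
    (hg : ∀ k ∈ A, ∀ z ∈ s, HasDerivWithinAt (g k) (g' k z) s z)
    (hg' : ∀ k ∈ A, ∀ z ∈ s, HasDerivWithinAt (g' k) (g'' k z) s z)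
    (hne : ∀ k ∈ A, ∀ z ∈ s, g' k z ≠ 0) (hbound : ∀ k ∈ A, ∀ z ∈ s, |g' k z| ≤ α)
    (hratio : ∀ k ∈ A, ∀ z ∈ s, |g'' k z / g' k z| ≤ c)
    (hw : ∀ i ∈ w, i ∈ A) (hx : x ∈ s) (hy : y ∈ s) :
    |Real.log (wordDeriv g g' w x) - Real.log (wordDeriv g g' w y)| ≤
      c * (∑ i ∈ Finset.range w.length, α ^ i) * |x - y| := by
  induction w with
  | nil => simp [wordDeriv]
  | cons k w ih =>
    obtain ⟨hk, hw⟩ := List.forall_mem_cons.1 hw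
    have hmaps := mapsTo_wordComp_s9 hmap hw
    have hletter : |Real.log (g' k (wordComp g w x)) - Real.log (g' k (wordComp g w y))| ≤
        c * (α ^ w.length * |x - y|) :=
      (abs_log_sub_log_le_of_abs_deriv_div_le hs (hg' k hk) (hne k hk) (hratio k hk)
        (hmaps hx) (hmaps hy)).trans <|
        mul_le_mul_of_nonneg_left (abs_wordComp_sub_le hs hα₀ hmap hg hbound hw hx hy) hc
    rw [log_wordDeriv_cons hmap hne hk hw hx, log_wordDeriv_cons hmap hne hk hw hy,
      add_sub_add_comm, List.length_cons, Finset.sum_range_succ]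
    calc _ ≤ _ := abs_add_le _ _
      _ ≤ c * (α ^ w.length * |x - y|) +
          c * (∑ i ∈ Finset.range w.length, α ^ i) * |x - y| := add_le_add hletter (ih hw)
      _ = _ := by ring

theorem abs_wordDeriv_div_le_exp (hs : Convex ℝ s) (hα₀ : 0 ≤ α) (hα₁ : α < 1) (hc : 0 ≤ c)
    (hmap : ∀ k ∈ A, MapsTo (g k) s s)
    (hg : ∀ k ∈ A, ∀ z ∈ s, HasDerivWithinAt (g k) (g' k z) s z)
    (hg' : ∀ k ∈ A, ∀ z ∈ s, HasDerivWithinAt (g' k) (g'' k z) s z)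
    (hne : ∀ k ∈ A, ∀ z ∈ s, g' k z ≠ 0) (hbound : ∀ k ∈ A, ∀ z ∈ s, |g' k z| ≤ α)
    (hratio : ∀ k ∈ A, ∀ z ∈ s, |g'' k z / g' k z| ≤ c)
    (hw : ∀ i ∈ w, i ∈ A) (hx : x ∈ s) (hy : y ∈ s) :
    |wordDeriv g g' w x| / |wordDeriv g g' w y| ≤ Real.exp (c / (1 - α) * |x - y|) := by
  rw [← Real.exp_log_eq_abs (wordDeriv_ne_zero hmap hne hw hx),
    ← Real.exp_log_eq_abs (wordDeriv_ne_zero hmap hne hw hy), ← Real.exp_sub, Real.exp_le_exp]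
  have hgeom : ∑ i ∈ Finset.range w.length, α ^ i ≤ (1 - α)⁻¹ := by
    simpa using geom_sum_Ico_le_of_lt_one (m := 0) (n := w.length) hα₀ hα₁
  calc Real.log (wordDeriv g g' w x) - Real.log (wordDeriv g g' w y)
      ≤ c * (∑ i ∈ Finset.range w.length, α ^ i) * |x - y| :=
        (le_abs_self _).trans <|
          abs_log_wordDeriv_sub_le_geom_sum hs hα₀ hc hmap hg hg' hne hbound hratio hw hx hy
    _ ≤ c * (1 - α)⁻¹ * |x - y| := by gcongr
    _ = c / (1 - α) * |x - y| := by rw [div_eq_mul_inv]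

theorem distortion_estimate_general (hs : Convex ℝ s) (hbdd : Bornology.IsBounded s)
    (hα₀ : 0 ≤ α) (hα₁ : α < 1) (hc : 0 < c) (hmap : ∀ k ∈ A, MapsTo (g k) s s)
    (hg : ∀ k ∈ A, ∀ z ∈ s, HasDerivWithinAt (g k) (g' k z) s z)
    (hg' : ∀ k ∈ A, ∀ z ∈ s, HasDerivWithinAt (g' k) (g'' k z) s z)
    (hne : ∀ k ∈ A, ∀ z ∈ s, g' k z ≠ 0) (hbound : ∀ k ∈ A, ∀ z ∈ s, |g' k z| ≤ α)
    (hratio : ∀ k ∈ A, ∀ z ∈ s, |g'' k z / g' k z| ≤ c) :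
    ∃ D > (0 : ℝ), ∀ w : List ℕ, (∀ i ∈ w, i ∈ A) → ∀ x ∈ s, ∀ y ∈ s,
      |wordDeriv g g' w x| / |wordDeriv g g' w y| ≤
        1 + c / (1 - α) * |x - y| + D * |x - y| ^ 2 := by
  have hK : 0 < c / (1 - α) := div_pos hc (sub_pos.2 hα₁)
  refine ⟨(c / (1 - α)) ^ 2 * Real.exp (c / (1 - α) * Metric.diam s), by positivity,
    fun w hw x hx y hy => ?_⟩
  exact (abs_wordDeriv_div_le_exp hs hα₀ hα₁ hc.le hmap hg hg' hne hbound hratio hw hx hy).trans <|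
    exp_mul_le_one_add_add_mul_sq hK.le (abs_nonneg _) (Metric.dist_le_diam_of_mem hbdd hx hy)

end Words

/-- Distortion bound for compositions: if `|g_k′| < α < 1` and `|g_k″/g_k′| < c` uniformly,
    then there is `D > 0` with
    `|g_ω′(x)|/|g_ω′(y)| ≤ 1 + (c/(1-α))·|x-y| + D·|x-y|²` for all finite words `ω`. -/
theorem distortion_estimate
    (g g' g'' : ℕ → ℝ → ℝ) (α c : ℝ) (hα : α < 1) (hc : 0 < c)
    (hmap : ∀ k, 1 ≤ k → Set.MapsTo (g k) (Set.Icc (0 : ℝ) 1) (Set.Icc (0 : ℝ) 1))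
    (hd1 : ∀ k, 1 ≤ k → ∀ x ∈ Set.Icc (0 : ℝ) 1, HasDerivAt (g k) (g' k x) x)
    (hd2 : ∀ k, 1 ≤ k → ∀ x ∈ Set.Icc (0 : ℝ) 1, HasDerivAt (g' k) (g'' k x) x)
    (hne : ∀ k, 1 ≤ k → ∀ x ∈ Set.Icc (0 : ℝ) 1, g' k x ≠ 0)
    (hb1 : ∀ k, 1 ≤ k → ∀ x ∈ Set.Icc (0 : ℝ) 1, |g' k x| < α)
    (hb2 : ∀ k, 1 ≤ k → ∀ x ∈ Set.Icc (0 : ℝ) 1, |g'' k x / g' k x| < c) :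
    ∃ D > (0 : ℝ), ∀ w : List ℕ, w ≠ [] → (∀ i ∈ w, 1 ≤ i) →
      ∀ x ∈ Set.Icc (0 : ℝ) 1, ∀ y ∈ Set.Icc (0 : ℝ) 1,
        |wordDeriv g g' w x| / |wordDeriv g g' w y| ≤
          1 + c / (1 - α) * |x - y| + D * |x - y| ^ 2 := by
  have hα₀ : 0 ≤ α := (abs_nonneg _).trans (hb1 1 le_rfl 0 (by simp)).le
  obtain ⟨D, hD, hest⟩ := distortion_estimate_general (A := Ici 1) (convex_Icc 0 1)
    (Metric.isBounded_Icc 0 1) hα₀ hα hc hmap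
    (fun k hk x hx => (hd1 k hk x hx).hasDerivWithinAt)
    (fun k hk x hx => (hd2 k hk x hx).hasDerivWithinAt) hne
    (fun k hk x hx => (hb1 k hk x hx).le) (fun k hk x hx => (hb2 k hk x hx).le)
  exact ⟨D, hD, fun w _ => hest w⟩
end
end
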